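/- There exists a constant c > 0 such that for infinitely many integers D, the Mordell equation y² = x³ + D has more than c·(log|D|)^{17/19} integral solutions; that is, the set {D ∈ ℤ : #{(x, y) ∈ ℤ² : y² = x³ + D} > c·(log|D|)^{17/19}} is infinite. -/

import Mathlib

/-!
Suppose `y² = x³ + k`, with `k > 0`, has independent rational points `P₁, …, Pᵣ`. The sums `∑ nᵢ Pᵢ`
with `1 ≤ nᵢ ≤ T` are `Tʳ` distinct points with coordinates `a / d²`, `b / d³` and `log d ≪ T²`. If
`M` is the product of all these denominators `d`, then `(x, y) ↦ (M² x, M³ y)` makes all of them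
integral on `y² = x³ + k M⁶`, and `log (k M⁶) ≪ Tʳ⁺²`. This gives the exponent `r / (r + 2)`.

The number of solutions is read off with `Set.ncard`, which is `0` on infinite sets, so Mordell's
finiteness theorem is needed for `D > 0`. A solution gives the binary cubic form
`X³ - 3 x X Y² + 2 y Y³`, which represents `1`. If it is irreducible, reduction theory moves it to
one of finitely many forms `G` of negative discriminant, so it remains to solve the Thue equations
`G = 1`. They live in cubic fields of unit rank one, where Skolem's `p`-adic method bounds the
number of powers of the fundamental unit lying in a plane.

For `r = 17` independence of explicit points is checked by 2-descent: for each of seventeen roots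
`θ` of `X³ + k` in `ℚ_p`, the quadratic character of `x(P) - θ` is a homomorphism to `ℤ/2`, and the
resulting `17 × 17` matrix is invertible.
-/

open Polynomial NumberField

section Skolem

open scoped Nat

theorem factorial_mul_pow_half_dvd_pow (p : ℕ) [Fact p.Prime] (hp : p ≠ 2) (j : ℕ) :
    (j ! : ℤ_[p]) * (p : ℤ_[p]) ^ (j / 2) ∣ (p : ℤ_[p]) ^ j := by
  have hp2 : 2 < p := (Fact.out : p.Prime).two_le.lt_of_ne' hp
  have h_ne : (j ! : ℤ_[p]) ≠ 0 := Nat.cast_ne_zero.2 j.factorial_ne_zero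
  have h_val : (j ! : ℤ_[p]).valuation = padicValNat p j ! := by
    have h := PadicInt.valuation_coe (j ! : ℤ_[p])
    rw [PadicInt.coe_natCast, Padic.valuation_natCast] at h
    exact_mod_cast h.symm
  have h_le : padicValNat p j ! + j / 2 ≤ j := by
    have h_legendre : (p - 1) * padicValNat p j ! = j - (p.digits j).sum :=
      sub_one_mul_padicValNat_factorial j
    have h_two : 2 * padicValNat p j ! ≤ (p - 1) * padicValNat p j ! :=
      Nat.mul_le_mul_right _ (by omega)
    omega
  rw [PadicInt.unitCoeff_spec h_ne, h_val, mul_assoc, ← pow_add]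
  exact (PadicInt.unitCoeff h_ne).isUnit.dvd_mul_left.1 <|
    mul_dvd_mul_left _ (pow_dvd_pow _ h_le)

theorem C_dvd_of_card_roots {R : Type*} [CommRing R] [IsDomain R] {P Q : R[X]} {a : R}
    {S : Finset R} (hS : ∀ x ∈ S, P.IsRoot x) (hQ : Q.degree < S.card) (hPQ : C a ∣ P - Q) :
    C a ∣ P := by
  obtain ⟨A, hA⟩ := hPQ
  have h_monic : (∏ x ∈ S, (X - C x)).Monic := monic_prod_X_sub_C _ _
  have h_dvd : ∏ x ∈ S, (X - C x) ∣ P := by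
    rcases eq_or_ne P 0 with rfl | hP
    · exact dvd_zero _
    · exact (Multiset.prod_X_sub_C_dvd_iff_le_roots hP S.val).2 <|
        Finset.val_le_iff_val_subset.2 fun x hx ↦ (mem_roots hP).2 (hS x hx)
  have h_degree : (∏ x ∈ S, (X - C x)).degree = (S.card : WithBot ℕ) := by
    simp [degree_prod]
  have h_mod : Q + C a * (A %ₘ ∏ x ∈ S, (X - C x)) = 0 := by
    rw [← (modByMonic_eq_self_iff (p := Q) h_monic).2 (h_degree.symm ▸ hQ), ← smul_eq_C_mul,
      ← smul_modByMonic, ← add_modByMonic, smul_eq_C_mul, ← hA, add_sub_cancel,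
      (modByMonic_eq_zero_iff_dvd h_monic).2 h_dvd]
  exact ⟨A - A %ₘ ∏ x ∈ S, (X - C x), by linear_combination hA + h_mod⟩

variable {R : Type*} [CommRing R]

/-- The polynomial `∑_{j < L} e j * X (X - 1) ⋯ (X - j + 1)`, a truncated Newton series. -/
noncomputable def newtonPolynomial (e : ℕ → R) (L : ℕ) : R[X] :=
  ∑ j ∈ Finset.range L, C (e j) * descPochhammer R j

theorem degree_newtonPolynomial_lt [IsDomain R] (e : ℕ → R) (L : ℕ) :
    (newtonPolynomial e L).degree < L := by
  rw [newtonPolynomial, ← mem_degreeLT]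
  refine Submodule.sum_mem _ fun j hj ↦ ?_
  rw [← smul_eq_C_mul]
  refine Submodule.smul_mem _ _ (mem_degreeLT.2 (degree_le_natDegree.trans_lt ?_))
  rw [descPochhammer_natDegree]
  exact_mod_cast Finset.mem_range.1 hj

theorem eval_newtonPolynomial (e : ℕ → R) {n L : ℕ} (hn : n < L) :
    (newtonPolynomial e L).eval (n : R) =
      ∑ j ∈ Finset.range (n + 1), (n.choose j : R) * (j ! * e j) := by
  rw [newtonPolynomial, eval_finsetSum]
  symm
  refine Finset.sum_subset_zero_on_sdiff (Finset.range_mono hn) (fun j hj ↦ ?_) fun j _ ↦ ?_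
  · have hnj : n < j := by simpa using (Finset.mem_sdiff.1 hj).2
    rw [eval_mul, descPochhammer_eval_eq_descFactorial, Nat.descFactorial_of_lt hnj,
      Nat.cast_zero, mul_zero]
  · rw [eval_mul, eval_C, descPochhammer_eval_eq_descFactorial,
      Nat.descFactorial_eq_factorial_mul_choose]
    push_cast
    ring

theorem C_dvd_newtonPolynomial_sub {e : ℕ → R} {a : R} {l L : ℕ} (hl : l ≤ L)
    (ha : ∀ j, l ≤ j → a ∣ e j) : C a ∣ newtonPolynomial e L - newtonPolynomial e l := by
  rw [newtonPolynomial, newtonPolynomial, ← Finset.sum_range_add_sum_Ico _ hl, add_sub_cancel_left]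
  exact Finset.dvd_sum fun j hj ↦
    (map_dvd C (ha j (Finset.mem_Ico.1 hj).1)).mul_right _

/-- The `p`-adic Newton series `∑_j c j * p ^ j * (m choose j)` evaluated at `m : ℕ`; it
interpolates the powers `(1 + p β) ^ m`. -/
noncomputable def padicNewtonSum (p : ℕ) [Fact p.Prime] (c : ℕ → ℤ_[p]) (m : ℕ) : ℤ_[p] :=
  ∑ j ∈ Finset.range (m + 1), (m.choose j : ℤ_[p]) * (p ^ j * c j)

variable {p : ℕ} [Fact p.Prime] {c : ℕ → ℤ_[p]}

theorem pow_dvd_padicNewtonSum (hp : p ≠ 2) (hc : {m | padicNewtonSum p c m = 0}.Infinite)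
    (s m : ℕ) : (p : ℤ_[p]) ^ s ∣ padicNewtonSum p c m := by
  choose g hg using factorial_mul_pow_half_dvd_pow p hp
  set e : ℕ → ℤ_[p] := fun j ↦ p ^ (j / 2) * g j * c j with he
  have h_dvd (j : ℕ) (hj : 2 * s ≤ j) : (p : ℤ_[p]) ^ s ∣ e j :=
    ((pow_dvd_pow _ (by omega)).mul_right _).mul_right _
  have h_sum {n L : ℕ} (hn : n < L) : (newtonPolynomial e L).eval (n : ℤ_[p]) =
      padicNewtonSum p c n := by
    rw [eval_newtonPolynomial e hn, padicNewtonSum]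
    exact Finset.sum_congr rfl fun j _ ↦ by rw [hg j, he]; ring
  obtain ⟨S, hS, hcard⟩ := hc.exists_subset_card_eq (2 * s)
  set L := m + S.sup id + 2 * s + 1
  have h_roots : ∀ x ∈ S.map (Nat.castEmbedding (R := ℤ_[p])), (newtonPolynomial e L).IsRoot x := by
    intro x hx
    obtain ⟨n, hn, rfl⟩ := Finset.mem_map.1 hx
    have hnL : n ≤ S.sup id := Finset.le_sup (f := id) hn
    exact (h_sum (by omega)).trans (hS hn)
  have h_degree : (newtonPolynomial e (2 * s)).degree <
      (S.map (Nat.castEmbedding (R := ℤ_[p]))).card := by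
    rw [Finset.card_map, hcard]
    exact degree_newtonPolynomial_lt e (2 * s)
  obtain ⟨A, hA⟩ := C_dvd_of_card_roots h_roots h_degree
    (C_dvd_newtonPolynomial_sub (L := L) (by omega) h_dvd)
  rw [← h_sum (show m < L by omega), hA, eval_mul, eval_C]
  exact dvd_mul_right _ _

theorem padicNewtonSum_eq_zero (hp : p ≠ 2) (hc : {m | padicNewtonSum p c m = 0}.Infinite)
    (m : ℕ) : padicNewtonSum p c m = 0 := by
  by_contra h_ne
  have h_mem := Ideal.mem_span_singleton.2
    (pow_dvd_padicNewtonSum hp hc ((padicNewtonSum p c m).valuation + 1) m)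
  exact absurd ((PadicInt.mem_span_pow_iff_le_valuation _ h_ne _).1 h_mem) (by omega)

end Skolem

section UnitsInHyperplane

variable {K : Type*} [Field K] [NumberField K]

theorem exists_intCast_eq_mul_ringOfIntegers (l : K →ₗ[ℚ] ℚ) :
    ∃ d : ℤ, d ≠ 0 ∧ ∀ x : 𝓞 K, ∃ n : ℤ, (d : ℚ) * l x = n := by
  let f : 𝓞 K →ₗ[ℤ] ℚ :=
    l.restrictScalars ℤ ∘ₗ (Algebra.linearMap (𝓞 K) K).restrictScalars ℤ
  obtain ⟨d, hd, h_int⟩ := FractionalIdeal.isFractional_of_fg (S := nonZeroDivisors ℤ)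
    (Submodule.FG.map f Module.Finite.fg_top)
  refine ⟨d, nonZeroDivisors.ne_zero hd, fun x ↦ ?_⟩
  obtain ⟨n, hn⟩ := h_int (f x) (Submodule.mem_map_of_mem trivial)
  exact ⟨n, by simpa [f] using hn.symm⟩

theorem linearMap_eq_zero_of_forall_mul_pow {F L V : Type*} [Field F] [Field L] [Algebra F L]
    [AddCommGroup V] [Module F V] (l : L →ₗ[F] V) {w η : L} (hw : w ≠ 0) (h_alg : IsAlgebraic F η)
    (hη : IntermediateField.adjoin F {η} = ⊤) (h : ∀ m : ℕ, l (w * η ^ m) = 0) : l = 0 := by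
  have h_mul (x : L) : l (w * x) = 0 := by
    have hx : x ∈ (IntermediateField.adjoin F {η}).toSubalgebra := by rw [hη]; trivial
    rw [IntermediateField.adjoin_simple_toSubalgebra_of_isAlgebraic h_alg,
      Algebra.adjoin_singleton_eq_range_aeval] at hx
    obtain ⟨g, rfl⟩ := hx
    change l (_ * aeval _ g) = 0
    rw [aeval_eq_sum_range, Finset.mul_sum, map_sum]
    refine Finset.sum_eq_zero fun i _ ↦ ?_
    rw [mul_smul_comm, map_smul, h, smul_zero]
  ext x
  simpa [mul_inv_cancel_left₀ hw] using h_mul (w⁻¹ * x)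

theorem adjoin_unit_eq_top (h_prime : (Module.finrank ℚ K).Prime) {η : (𝓞 K)ˣ} (hη : η ^ 2 ≠ 1) :
    IntermediateField.adjoin ℚ {(η : K)} = ⊤ := by
  have := IntermediateField.isSimpleOrder_of_finrank_prime ℚ K h_prime
  refine (eq_bot_or_eq_top _).resolve_left fun h_bot ↦ hη ?_
  obtain ⟨q, hq⟩ :=
    IntermediateField.mem_bot.1 (IntermediateField.adjoin_simple_eq_bot_iff.1 h_bot)
  replace hq : ((η : 𝓞 K) : K) = algebraMap ℚ K q := hq.symm
  have h_norm := NumberField.isUnit_iff_norm.1 η.isUnit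
  rw [RingOfIntegers.coe_norm, hq, Algebra.norm_algebraMap, abs_pow,
    pow_eq_one_iff_of_nonneg (abs_nonneg q) h_prime.ne_zero] at h_norm
  have h_sq : ((η : 𝓞 K) : K) ^ 2 = 1 := by
    rw [hq, ← map_pow, ← sq_abs, h_norm, one_pow, map_one]
  exact Units.ext (RingOfIntegers.ext (by push_cast; exact h_sq))

theorem linearMap_mul_pow_eq_sum (l : K →ₗ[ℚ] ℚ) (p : ℕ) (w β : K) (m : ℕ) :
    l (w * (1 + p * β) ^ m) =
      ∑ j ∈ Finset.range (m + 1), (m.choose j : ℚ) * (p ^ j * l (w * β ^ j)) := by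
  have h_binomial : w * (1 + p * β) ^ m =
      ∑ j ∈ Finset.range (m + 1), ((m.choose j : ℚ) * p ^ j) • (w * β ^ j) := by
    rw [add_comm, add_pow, Finset.mul_sum]
    refine Finset.sum_congr rfl fun j _ ↦ ?_
    simp only [Algebra.smul_def, map_mul, map_pow, map_natCast, one_pow]
    ring
  rw [h_binomial, map_sum]
  exact Finset.sum_congr rfl fun j _ ↦ by rw [map_smul, smul_eq_mul, mul_assoc]

/-- Skolem's argument: up to a fixed denominator, `m ↦ l (w (1 + p β) ^ m)` is a `p`-adic Newton
series. -/
theorem linearMap_mul_pow_eq_zero {p : ℕ} [Fact p.Prime] (hp : p ≠ 2) (l : K →ₗ[ℚ] ℚ) (w β : 𝓞 K)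
    (h_inf : {m : ℕ | l (w * (1 + p * β) ^ m) = 0}.Infinite) (m : ℕ) :
    l (w * (1 + p * β) ^ m) = 0 := by
  obtain ⟨d, hd, h_int⟩ := exists_intCast_eq_mul_ringOfIntegers l
  choose c hc using fun j : ℕ ↦ h_int (w * β ^ j)
  have h_series (m : ℕ) : d * l (w * (1 + p * β) ^ m) =
      ((∑ j ∈ Finset.range (m + 1), (m.choose j : ℤ) * (p ^ j * c j) : ℤ) : ℚ) := by
    rw [linearMap_mul_pow_eq_sum, Finset.mul_sum]
    push_cast
    refine Finset.sum_congr rfl fun j _ ↦ ?_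
    rw [← hc j]
    push_cast
    ring
  have h_iff (m : ℕ) : l (w * (1 + p * β) ^ m) = 0 ↔ padicNewtonSum p (fun j ↦ c j) m = 0 := by
    rw [← mul_right_inj' (Int.cast_ne_zero.2 hd : (d : ℚ) ≠ 0), mul_zero, h_series, padicNewtonSum]
    norm_cast
  simp only [h_iff] at h_inf ⊢
  exact padicNewtonSum_eq_zero hp h_inf m

theorem finite_unit_progression_inter_ker (h_prime : (Module.finrank ℚ K).Prime) {p : ℕ}
    [Fact p.Prime] (hp : p ≠ 2) {l : K →ₗ[ℚ] ℚ} (hl : l ≠ 0) (w η : (𝓞 K)ˣ) {β : 𝓞 K}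
    (hη : (η : 𝓞 K) = 1 + p * β) :
    {u : (𝓞 K)ˣ | l (u : K) = 0 ∧ ∃ m : ℕ, u = w * η ^ m}.Finite := by
  by_cases h_order : η ^ 2 = 1
  · refine (Set.toFinite {w, w * η}).subset ?_
    rintro u ⟨-, m, rfl⟩
    obtain ⟨j, rfl | rfl⟩ := m.even_or_odd'
    · simp [pow_mul, h_order]
    · simp [pow_succ, pow_mul, h_order]
  by_contra h_inf
  have h_coe (m : ℕ) : ((w * η ^ m : (𝓞 K)ˣ) : K) = w * (1 + p * (β : K)) ^ m := by
    simp [hη]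
  have h_zero : {m : ℕ | l (w * (1 + p * (β : K)) ^ m) = 0}.Infinite := by
    refine fun h_fin ↦ h_inf ((h_fin.image fun m ↦ w * η ^ m).subset ?_)
    rintro u ⟨hu, m, rfl⟩
    exact ⟨m, by rwa [Set.mem_ofPred_eq, ← h_coe], rfl⟩
  refine hl (linearMap_eq_zero_of_forall_mul_pow l (w := w) (by simp)
    (Algebra.IsAlgebraic.isAlgebraic _) (adjoin_unit_eq_top h_prime h_order) fun m ↦ ?_)
  simpa [hη] using linearMap_mul_pow_eq_zero hp l w β h_zero m

theorem exists_pow_eq_one_add_mul (p : ℕ) [Fact p.Prime] :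
    ∃ N : ℕ, 0 < N ∧ ∀ η : (𝓞 K)ˣ, ∃ β : 𝓞 K, ((η ^ N : (𝓞 K)ˣ) : 𝓞 K) = 1 + p * β := by
  set I := Ideal.span {(p : 𝓞 K)}
  have hI : I ≠ ⊥ := by simp [I, (Fact.out : p.Prime).ne_zero]
  have := Ideal.finiteQuotientOfFreeOfNeBot I hI
  refine ⟨Nat.card (𝓞 K ⧸ I)ˣ, Nat.card_pos, fun η ↦ ?_⟩
  have h_mk : Ideal.Quotient.mk I ((η : 𝓞 K) ^ Nat.card (𝓞 K ⧸ I)ˣ) = Ideal.Quotient.mk I 1 := by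
    simpa [-pow_card_eq_one'] using congrArg Units.val
      (pow_card_eq_one' (x := Units.map (Ideal.Quotient.mk I).toMonoidHom η))
  rw [Ideal.Quotient.eq, Ideal.mem_span_singleton] at h_mk
  obtain ⟨β, hβ⟩ := h_mk
  exact ⟨β, by push_cast; linear_combination hβ⟩

theorem exists_eq_torsion_mul_zpow (h_rank : Units.rank K = 1) :
    ∃ ε : (𝓞 K)ˣ, ∀ u : (𝓞 K)ˣ, ∃ (ζ : Units.torsion K) (n : ℤ), u = ζ * ε ^ n := by
  have : Unique (Fin (Units.rank K)) := h_rank ▸ inferInstance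
  refine ⟨Units.fundSystem K default, fun u ↦ ?_⟩
  obtain ⟨⟨ζ, e⟩, h, -⟩ := Units.exist_unique_eq_mul_prod K u
  exact ⟨ζ, e default, by rwa [Fintype.prod_unique] at h⟩

theorem finite_units_inter_ker (h_prime : (Module.finrank ℚ K).Prime) (h_rank : Units.rank K = 1)
    {l : K →ₗ[ℚ] ℚ} (hl : l ≠ 0) : {u : (𝓞 K)ˣ | l (u : K) = 0}.Finite := by
  have : Fact (Nat.Prime 3) := ⟨Nat.prime_three⟩
  obtain ⟨N, hN, h_pow⟩ := exists_pow_eq_one_add_mul (K := K) 3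
  obtain ⟨ε, hε⟩ := exists_eq_torsion_mul_zpow h_rank
  have h_fin (η : (𝓞 K)ˣ) : (⋃ t : Units.torsion K × Fin N, {u : (𝓞 K)ˣ | l (u : K) = 0 ∧
      ∃ m : ℕ, u = t.1 * η ^ (t.2 : ℕ) * (η ^ N) ^ m}).Finite :=
    Set.finite_iUnion fun t ↦
      finite_unit_progression_inter_ker h_prime (by decide) hl _ _ (h_pow η).choose_spec
  have h_mem (η u : (𝓞 K)ˣ) (hu : l (u : K) = 0) (ζ : Units.torsion K) (k : ℕ)
      (h : u = ζ * η ^ k) : u ∈ ⋃ t : Units.torsion K × Fin N, {u : (𝓞 K)ˣ | l (u : K) = 0 ∧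
      ∃ m : ℕ, u = t.1 * η ^ (t.2 : ℕ) * (η ^ N) ^ m} :=
    Set.mem_iUnion.2 ⟨⟨ζ, k % N, k.mod_lt hN⟩, hu, k / N, by
      rw [h, mul_assoc, ← pow_mul, ← pow_add, Nat.mod_add_div]⟩
  refine ((h_fin ε).union (h_fin ε⁻¹)).subset fun u hu ↦ ?_
  obtain ⟨ζ, n, hζ⟩ := hε u
  obtain ⟨k, rfl | rfl⟩ := n.eq_nat_or_neg
  · exact .inl (h_mem ε u hu ζ k (by simpa using hζ))
  · exact .inr (h_mem ε⁻¹ u hu ζ k (by simpa using hζ))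

end UnitsInHyperplane

section Thue

/-- The cubic polynomial `X³ + b X + c`. -/
noncomputable def depressedCubic {R : Type*} [CommRing R] (b c : R) : R[X] :=
  X ^ 3 + C b * X + C c

theorem natDegree_depressedCubic {R : Type*} [CommRing R] [Nontrivial R] (b c : R) :
    (depressedCubic b c).natDegree = 3 := by
  rw [depressedCubic]
  compute_degree!

theorem monic_depressedCubic {R : Type*} [CommRing R] (b c : R) : (depressedCubic b c).Monic := by
  rw [depressedCubic]
  monicity!

theorem eval₂_depressedCubic {R S : Type*} [CommRing R] [CommRing S] (f : R →+* S) (z : S)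
    (b c : R) : (depressedCubic b c).eval₂ f z = z ^ 3 + f b * z + f c := by
  simp only [depressedCubic, eval₂_add, eval₂_mul, eval₂_pow, eval₂_X, eval₂_C]

theorem irreducible_depressedCubic_iff {F : Type*} [Field F] (b c : F) :
    Irreducible (depressedCubic b c) ↔ ∀ t : F, t ^ 3 + b * t + c ≠ 0 := by
  have h_degree := natDegree_depressedCubic b c
  rw [irreducible_iff_roots_eq_zero_of_degree_le_three (by omega) (by omega),
    Multiset.eq_zero_iff_forall_notMem]
  refine forall_congr' fun t ↦ not_congr ?_
  rw [mem_roots (monic_depressedCubic b c).ne_zero, IsRoot, eval, eval₂_depressedCubic]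
  rfl

theorem irreducible_depressedCubic_of_forall_int {b c : ℤ}
    (h : ∀ t : ℤ, t ^ 3 + b * t + c ≠ 0) : Irreducible (depressedCubic (b : ℚ) c) := by
  refine (irreducible_depressedCubic_iff _ _).2 fun q hq ↦ ?_
  have h_int : IsIntegral ℤ q := by
    refine ⟨depressedCubic b c, monic_depressedCubic b c, ?_⟩
    simpa [eval₂_depressedCubic] using hq
  obtain ⟨t, rfl⟩ := IsIntegrallyClosed.isIntegral_iff.1 h_int
  rw [eq_intCast] at hq
  exact h t (by exact_mod_cast hq)

theorem exists_real_root_depressedCubic (b c : ℝ) : ∃ r : ℝ, r ^ 3 + b * r + c = 0 := by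
  by_contra! h
  have h_le := ((irreducible_depressedCubic_iff b c).2 h).natDegree_le_two
  rw [natDegree_depressedCubic] at h_le
  omega

theorem exists_root_depressedCubic_im_pos {b c : ℝ} (h : 0 < 4 * b ^ 3 + 27 * c ^ 2) :
    ∃ z : ℂ, 0 < z.im ∧ z ^ 3 + b * z + c = 0 := by
  obtain ⟨r, hr⟩ := exists_real_root_depressedCubic b c
  -- The other two roots are those of `X² + r X + (r² + b)`, of discriminant `-(3 r² + 4 b)`.
  have h_disc : 0 < 3 * r ^ 2 + 4 * b := by
    refine pos_of_mul_pos_left (b := (3 * r ^ 2 + b) ^ 2) ?_ (sq_nonneg _)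
    have hc : c = -r ^ 3 - b * r := by linarith
    rw [hc] at h
    linarith
  set s := √(3 * r ^ 2 + 4 * b)
  have hs_pos : 0 < s := Real.sqrt_pos.2 h_disc
  refine ⟨-(r : ℂ) / 2 + s / 2 * Complex.I, by simpa using hs_pos, ?_⟩
  have hs : (s : ℂ) ^ 2 = 3 * r ^ 2 + 4 * b := by exact_mod_cast Real.sq_sqrt h_disc.le
  have hr' : (r : ℂ) ^ 3 + b * r + c = 0 := by exact_mod_cast hr
  linear_combination hr' +
    (-(r : ℂ) / 2 + s / 2 * Complex.I - r) * (s ^ 2 / 4 * Complex.I_sq - hs / 4)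

variable {K : Type*} [Field K] [NumberField K]

theorem units_rank_eq_one_of_not_isReal (h_finrank : Module.finrank ℚ K = 3) {φ : K →+* ℂ}
    (hφ : ¬ ComplexEmbedding.IsReal φ) : Units.rank K = 1 := by
  classical
  have h_pos : 0 < InfinitePlace.nrComplexPlaces K :=
    Fintype.card_pos_iff.2 ⟨⟨InfinitePlace.mk φ, φ, hφ, rfl⟩⟩
  have h_finrank' := InfinitePlace.card_add_two_mul_card_eq_rank K
  have h_card := InfinitePlace.card_eq_nrRealPlaces_add_nrComplexPlaces K
  rw [Units.rank]
  omega

theorem finite_isUnit_intCast_sub_mul (h_finrank : Module.finrank ℚ K = 3)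
    (h_rank : Units.rank K = 1) {θ : 𝓞 K} (hθ : (θ : K) ∉ Set.range (algebraMap ℚ K)) :
    {t : ℤ × ℤ | IsUnit ((t.1 : 𝓞 K) - t.2 * θ)}.Finite := by
  classical
  have h_lt : Submodule.span ℚ {1, (θ : K)} < ⊤ := by
    refine lt_top_iff_ne_top.2 fun h_top ↦ ?_
    have h_le := finrank_span_finset_le_card (R := ℚ) {1, (θ : K)}
    rw [Finset.coe_pair, Set.finrank, h_top, finrank_top, h_finrank] at h_le
    exact absurd (h_le.trans Finset.card_le_two) (by norm_num)
  obtain ⟨l, hl, h_ker⟩ := Submodule.exists_le_ker_of_lt_top _ h_lt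
  have h_one : l 1 = 0 := h_ker (Submodule.subset_span (by simp))
  have h_theta : l (θ : K) = 0 := h_ker (Submodule.subset_span (by simp))
  have h_inj : Function.Injective fun t : ℤ × ℤ ↦ (t.1 : 𝓞 K) - t.2 * θ := by
    rintro ⟨a, b⟩ ⟨a', b'⟩ h
    have h_K : (a : K) - b * θ = a' - b' * θ := by simpa using congrArg (algebraMap (𝓞 K) K) h
    have hb : b = b' := by
      by_contra hb
      have hb' : (b : K) - b' ≠ 0 := sub_ne_zero.2 (Int.cast_injective.ne hb)
      refine hθ ⟨(a - a') / (b - b'), ?_⟩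
      rw [map_div₀, map_sub, map_sub, map_intCast, map_intCast, map_intCast, map_intCast,
        div_eq_iff hb']
      linear_combination h_K
    subst hb
    exact Prod.ext (by simpa using h_K) rfl
  refine .of_finite_image (f := fun t : ℤ × ℤ ↦ (t.1 : 𝓞 K) - t.2 * θ) ?_ h_inj.injOn
  refine ((finite_units_inter_ker (h_finrank ▸ Nat.prime_three) h_rank hl).image
    Units.val).subset ?_
  rintro _ ⟨t, ⟨u, hu⟩, rfl⟩
  refine ⟨u, ?_, hu⟩
  have h_coe : algebraMap (𝓞 K) K (t.1 - t.2 * θ) = (t.1 : ℚ) • 1 - (t.2 : ℚ) • (θ : K) := by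
    simp [Algebra.smul_def]
  rw [Set.mem_ofPred_eq, hu, h_coe, map_sub, map_smul, map_smul, h_one, h_theta, smul_zero,
    smul_zero, sub_zero]

theorem finite_depressedCubic_thue_of_root (h_finrank : Module.finrank ℚ K = 3)
    (h_rank : Units.rank K = 1) {b c : ℤ} {θ : 𝓞 K} (h_root : θ ^ 3 + b * θ + c = 0)
    (hθ : (θ : K) ∉ Set.range (algebraMap ℚ K)) :
    {t : ℤ × ℤ | t.1 ^ 3 + b * t.1 * t.2 ^ 2 + c * t.2 ^ 3 = 1}.Finite := by
  refine (finite_isUnit_intCast_sub_mul h_finrank h_rank hθ).subset ?_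
  rintro ⟨p, q⟩ h
  have h_form : (p : 𝓞 K) ^ 3 + b * p * q ^ 2 + c * q ^ 3 = 1 := by exact_mod_cast h
  exact .of_mul_eq_one (p ^ 2 + p * q * θ + q ^ 2 * θ ^ 2 + b * q ^ 2) <| by
    linear_combination h_form - (q : 𝓞 K) ^ 3 * h_root

theorem numberField_adjoinRoot (g : ℚ[X]) [Fact (Irreducible g)] : NumberField (AdjoinRoot g) where
  to_charZero := charZero_of_injective_algebraMap (algebraMap ℚ (AdjoinRoot g)).injective
  to_finiteDimensional := (AdjoinRoot.powerBasis (Fact.out : Irreducible g).ne_zero).finite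

theorem exists_not_isReal_adjoinRoot {g : ℚ[X]} [Fact (Irreducible g)] {z : ℂ}
    (hz : z.im ≠ 0) (hg : aeval z g = 0) :
    ∃ φ : AdjoinRoot g →+* ℂ, ¬ ComplexEmbedding.IsReal φ := by
  let φ : AdjoinRoot g →+* ℂ := AdjoinRoot.lift (algebraMap ℚ ℂ) z hg
  refine ⟨φ, fun h ↦ hz ?_⟩
  have h_conj := RingHom.congr_fun h (AdjoinRoot.root g)
  rw [ComplexEmbedding.conjugate_coe_eq, show φ (AdjoinRoot.root g) = z from
    AdjoinRoot.lift_root hg] at h_conj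
  exact Complex.conj_eq_iff_im.1 h_conj

theorem finite_depressedCubic_thue {b c : ℤ} (h_irr : Irreducible (depressedCubic (b : ℚ) c))
    (h_disc : 0 < 4 * b ^ 3 + 27 * c ^ 2) :
    {t : ℤ × ℤ | t.1 ^ 3 + b * t.1 * t.2 ^ 2 + c * t.2 ^ 3 = 1}.Finite := by
  set g := depressedCubic (b : ℚ) c with hg
  have : Fact (Irreducible g) := ⟨h_irr⟩
  have := numberField_adjoinRoot g
  have h_finrank : Module.finrank ℚ (AdjoinRoot g) = 3 := by
    rw [(AdjoinRoot.powerBasis h_irr.ne_zero).finrank, ← natDegree_depressedCubic (b : ℚ) c]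
    rfl
  have h_root : AdjoinRoot.root g ^ 3 + b * AdjoinRoot.root g + c = 0 := by
    have h := AdjoinRoot.eval₂_root g
    rw [hg, eval₂_depressedCubic] at h
    simpa using h
  have h_integral : IsIntegral ℤ (AdjoinRoot.root g) :=
    ⟨depressedCubic b c, monic_depressedCubic b c, by
      rw [eval₂_depressedCubic]
      simpa using h_root⟩
  obtain ⟨z, hz, h_z⟩ :=
    exists_root_depressedCubic_im_pos (b := b) (c := c) (by exact_mod_cast h_disc)
  obtain ⟨φ, hφ⟩ := exists_not_isReal_adjoinRoot (g := g) hz.ne' <| by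
    rw [hg, aeval_def, eval₂_depressedCubic]
    simpa using h_z
  refine finite_depressedCubic_thue_of_root h_finrank
    (units_rank_eq_one_of_not_isReal h_finrank hφ) (θ := ⟨_, h_integral⟩)
    (RingOfIntegers.ext (by push_cast; exact h_root)) ?_
  rintro ⟨r, hr⟩
  refine (irreducible_depressedCubic_iff (b : ℚ) c).1 h_irr r
    ((algebraMap ℚ (AdjoinRoot g)).injective ?_)
  replace hr : algebraMap ℚ (AdjoinRoot g) r = AdjoinRoot.root g := hr
  rw [map_add, map_add, map_mul, map_pow, hr, map_zero]
  simpa using h_root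

end Thue

section BinaryCubicForms

open UpperHalfPlane
open scoped MatrixGroups Modular

/-- The integral binary cubic form `a X³ + b X² Y + c X Y² + d Y³`. -/
structure BinaryCubicForm where
  a : ℤ
  b : ℤ
  c : ℤ
  d : ℤ

namespace BinaryCubicForm

variable (F : BinaryCubicForm)

/-- The value of a binary cubic form at a point of a commutative ring. -/
def eval {S : Type*} [CommRing S] (x y : S) : S :=
  F.a * x ^ 3 + F.b * x ^ 2 * y + F.c * x * y ^ 2 + F.d * y ^ 3

/-- The discriminant of a binary cubic form. -/
def disc : ℤ :=
  F.b ^ 2 * F.c ^ 2 - 4 * F.a * F.c ^ 3 - 4 * F.b ^ 3 * F.d - 27 * F.a ^ 2 * F.d ^ 2 +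
    18 * F.a * F.b * F.c * F.d

/-- The Hessian of a binary cubic form, normalised to be the quadratic covariant of
discriminant `-3 * F.disc`. -/
def hessian (x y : ℤ) : ℤ :=
  (F.b ^ 2 - 3 * F.a * F.c) * x ^ 2 + (F.b * F.c - 9 * F.a * F.d) * x * y +
    (F.c ^ 2 - 3 * F.b * F.d) * y ^ 2

/-- The form obtained by the substitution `(X, Y) ↦ (g₀₀ X + g₀₁ Y, g₁₀ X + g₁₁ Y)`. -/
def subst (g : Matrix (Fin 2) (Fin 2) ℤ) : BinaryCubicForm where
  a := F.eval (g 0 0) (g 1 0)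
  b := 3 * F.a * g 0 0 ^ 2 * g 0 1 + F.b * (g 0 0 ^ 2 * g 1 1 + 2 * g 0 0 * g 0 1 * g 1 0) +
    F.c * (g 0 1 * g 1 0 ^ 2 + 2 * g 0 0 * g 1 0 * g 1 1) + 3 * F.d * g 1 0 ^ 2 * g 1 1
  c := 3 * F.a * g 0 0 * g 0 1 ^ 2 + F.b * (g 0 1 ^ 2 * g 1 0 + 2 * g 0 0 * g 0 1 * g 1 1) +
    F.c * (g 0 0 * g 1 1 ^ 2 + 2 * g 0 1 * g 1 0 * g 1 1) + 3 * F.d * g 1 0 * g 1 1 ^ 2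
  d := F.eval (g 0 1) (g 1 1)

/-- All coefficients are at most `N` in absolute value. -/
def CoeffLE (N : ℤ) : Prop :=
  |F.a| ≤ N ∧ |F.b| ≤ N ∧ |F.c| ≤ N ∧ |F.d| ≤ N

variable {F}

theorem eval_mul_mul {S : Type*} [CommRing S] (t x y : S) :
    F.eval (t * x) (t * y) = t ^ 3 * F.eval x y := by
  simp only [eval]
  ring

theorem eval_subst {S : Type*} [CommRing S] (g : Matrix (Fin 2) (Fin 2) ℤ) (x y : S) :
    (F.subst g).eval x y = F.eval (g 0 0 * x + g 0 1 * y) (g 1 0 * x + g 1 1 * y) := by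
  simp only [eval, subst]
  push_cast
  ring

theorem disc_subst (g : Matrix (Fin 2) (Fin 2) ℤ) : (F.subst g).disc = g.det ^ 6 * F.disc := by
  simp only [disc, subst, eval, Matrix.det_fin_two, Int.cast_id]
  ring

theorem hessian_subst (g : Matrix (Fin 2) (Fin 2) ℤ) (x y : ℤ) :
    (F.subst g).hessian x y =
      g.det ^ 2 * F.hessian (g 0 0 * x + g 0 1 * y) (g 1 0 * x + g 1 1 * y) := by
  simp only [hessian, subst, eval, Matrix.det_fin_two, Int.cast_id]
  ring

theorem subst_mul (g h : Matrix (Fin 2) (Fin 2) ℤ) : F.subst (g * h) = (F.subst g).subst h := by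
  simp only [subst, eval, Matrix.mul_apply, Fin.sum_univ_two, Int.cast_id, mk.injEq]
  refine ⟨?_, ?_, ?_, ?_⟩ <;> ring

theorem subst_one : F.subst 1 = F := by
  simp [subst, eval]

theorem subst_inv_subst (γ : SL(2, ℤ)) :
    (F.subst (γ⁻¹ : SL(2, ℤ))).subst γ = F := by
  rw [← subst_mul, ← Matrix.SpecialLinearGroup.coe_mul, inv_mul_cancel,
    Matrix.SpecialLinearGroup.coe_one, subst_one]

theorem finite_setOf_coeffLE (N : ℤ) : {F : BinaryCubicForm | F.CoeffLE N}.Finite := by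
  let I : Set ℤ := Set.Icc (-N) N
  have hI : I.Finite := Set.finite_Icc _ _
  refine ((hI.prod (hI.prod (hI.prod hI))).image fun t ↦ ⟨t.1, t.2.1, t.2.2.1, t.2.2.2⟩).subset ?_
  rintro ⟨a, b, c, d⟩ ⟨ha, hb, hc, hd⟩
  exact ⟨(a, b, c, d), ⟨abs_le.1 ha, abs_le.1 hb, abs_le.1 hc, abs_le.1 hd⟩, rfl⟩

theorem finite_subst_eval_eq_one (h : {t : ℤ × ℤ | F.eval t.1 t.2 = 1}.Finite) (γ : SL(2, ℤ)) :
    {t : ℤ × ℤ | (F.subst γ).eval t.1 t.2 = 1}.Finite := by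
  refine .of_finite_image
    (f := fun t : ℤ × ℤ ↦ (γ 0 0 * t.1 + γ 0 1 * t.2, γ 1 0 * t.1 + γ 1 1 * t.2))
    (h.subset ?_) ?_
  · rintro _ ⟨t, ht, rfl⟩
    exact (eval_subst _ _ _).symm.trans ht
  · rintro ⟨p, q⟩ - ⟨p', q'⟩ - h_eq
    obtain ⟨h_fst, h_snd⟩ := Prod.mk.inj h_eq
    have h_det : γ 0 0 * γ 1 1 - γ 0 1 * γ 1 0 = 1 := (Matrix.det_fin_two _).symm.trans γ.2
    refine Prod.ext ?_ ?_
    · linear_combination γ 1 1 * h_fst - γ 0 1 * h_snd - (p - p') * h_det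
    · linear_combination γ 0 0 * h_snd - γ 1 0 * h_fst - (q - q') * h_det

section Reduction

variable {w : ℂ}

theorem coeffs_eq_of_eval_eq_zero (hw : F.eval w 1 = 0) (h_im : w.im ≠ 0) :
    (F.c : ℝ) = F.a * (w.re ^ 2 + w.im ^ 2) - 2 * w.re * (F.b + 2 * w.re * F.a) ∧
      (F.d : ℝ) = (F.b + 2 * w.re * F.a) * (w.re ^ 2 + w.im ^ 2) := by
  have h_re : (F.eval w 1).re = F.a * (w.re ^ 3 - 3 * w.re * w.im ^ 2) +
      F.b * (w.re ^ 2 - w.im ^ 2) + F.c * w.re + F.d := by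
    simp only [eval, pow_succ, pow_zero, one_mul, mul_one, Complex.add_re,
      Complex.mul_re, Complex.mul_im, Complex.intCast_re, Complex.intCast_im]
    ring
  have h_im' : (F.eval w 1).im = w.im * (F.a * (3 * w.re ^ 2 - w.im ^ 2) +
      2 * F.b * w.re + F.c) := by
    simp only [eval, pow_succ, pow_zero, one_mul, mul_one, Complex.add_im,
      Complex.mul_re, Complex.mul_im, Complex.intCast_re, Complex.intCast_im]
    ring
  rw [hw, Complex.zero_re] at h_re
  rw [hw, Complex.zero_im] at h_im'
  have h_c := (mul_eq_zero.1 h_im'.symm).resolve_left h_im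
  exact ⟨by linear_combination h_c, by linear_combination -w.re * h_c - h_re⟩

theorem neg_disc_eq_of_eval_eq_zero (hw : F.eval w 1 = 0) (h_im : w.im ≠ 0) :
    -(F.disc : ℝ) = 4 * w.im ^ 2 *
      ((F.a * w.re + (F.b + 2 * w.re * F.a)) ^ 2 + F.a ^ 2 * w.im ^ 2) ^ 2 := by
  obtain ⟨hc, hd⟩ := coeffs_eq_of_eval_eq_zero hw h_im
  rw [disc]
  push_cast
  rw [hc, hd]
  ring

end Reduction

theorem bounds_of_mem_fundamentalDomain {A s u v Δ : ℝ} (hA : 1 ≤ A ^ 2) (hΔ : 1 ≤ Δ)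
    (hu : |u| ≤ 1 / 2) (huv : 1 ≤ u ^ 2 + v ^ 2)
    (h : Δ = 4 * v ^ 2 * ((A * u + s) ^ 2 + A ^ 2 * v ^ 2) ^ 2) :
    |A| ≤ Δ ∧ |s| ≤ 2 * Δ ∧ u ^ 2 + v ^ 2 ≤ Δ := by
  have hu_sq : u ^ 2 ≤ 1 / 4 := by
    rw [← sq_abs]
    nlinarith [abs_nonneg u]
  have hv_sq : 3 / 4 ≤ v ^ 2 := by linarith
  set Q := (A * u + s) ^ 2 + A ^ 2 * v ^ 2
  have h_le_Q : A ^ 2 * v ^ 2 ≤ Q := le_add_of_nonneg_left (sq_nonneg _)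
  have hv_le : v ^ 2 ≤ Q := (le_mul_of_one_le_left (sq_nonneg v) hA).trans h_le_Q
  have hA_le : 3 / 4 * A ^ 2 ≤ Q := by nlinarith
  have hQ_le : 9 / 4 * Q ≤ Δ := by
    calc 9 / 4 * Q ≤ 3 * Q ^ 2 := by nlinarith [hv_sq, hv_le]
      _ ≤ Δ := by nlinarith [sq_nonneg Q, hv_sq]
  have hA_abs : |A| ≤ Δ := abs_le_of_sq_le_sq (by nlinarith [hA_le]) (by linarith)
  have hAu_abs : |A * u| ≤ Δ * (1 / 2) := by
    rw [abs_mul]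
    gcongr
  have hAus_abs : |A * u + s| ≤ Δ :=
    abs_le_of_sq_le_sq (by nlinarith [mul_nonneg (sq_nonneg A) (sq_nonneg v)]) (by linarith)
  refine ⟨hA_abs, ?_, by linarith⟩
  rw [abs_le] at hAu_abs hAus_abs ⊢
  constructor <;> linarith

theorem coeff_bounds_of_mem_fundamentalDomain {A s u v Δ : ℝ} (hA : 1 ≤ A ^ 2) (hΔ : 1 ≤ Δ)
    (hu : |u| ≤ 1 / 2) (huv : 1 ≤ u ^ 2 + v ^ 2)
    (h : Δ = 4 * v ^ 2 * ((A * u + s) ^ 2 + A ^ 2 * v ^ 2) ^ 2) :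
    |A| ≤ 3 * Δ ^ 2 ∧ |s - 2 * u * A| ≤ 3 * Δ ^ 2 ∧
      |A * (u ^ 2 + v ^ 2) - 2 * u * s| ≤ 3 * Δ ^ 2 ∧ |s * (u ^ 2 + v ^ 2)| ≤ 3 * Δ ^ 2 := by
  obtain ⟨hA, hs, h_norm⟩ := bounds_of_mem_fundamentalDomain hA hΔ hu huv h
  rw [← abs_of_nonneg (by positivity : 0 ≤ u ^ 2 + v ^ 2)] at h_norm
  have hΔ_sq : Δ ≤ Δ ^ 2 := le_self_pow₀ hΔ two_ne_zero
  have h_two : |2 * u| ≤ 1 := by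
    rw [abs_mul, abs_two]
    linarith
  refine ⟨by linarith, ?_, ?_, ?_⟩
  · calc |s - 2 * u * A| ≤ |s| + |2 * u| * |A| := abs_mul (2 * u) A ▸ abs_sub _ _
      _ ≤ 2 * Δ + 1 * Δ := by gcongr
      _ ≤ 3 * Δ ^ 2 := by linarith
  · calc |A * (u ^ 2 + v ^ 2) - 2 * u * s| ≤ |A| * |u ^ 2 + v ^ 2| + |2 * u| * |s| := by
          rw [← abs_mul, ← abs_mul]
          exact abs_sub _ _
      _ ≤ Δ * Δ + 1 * (2 * Δ) := by gcongr
      _ ≤ 3 * Δ ^ 2 := by linarith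
  · calc |s * (u ^ 2 + v ^ 2)| = |s| * |u ^ 2 + v ^ 2| := abs_mul _ _
      _ ≤ 2 * Δ * Δ := by gcongr
      _ ≤ 3 * Δ ^ 2 := by linarith [sq_nonneg Δ]

theorem coeffLE_of_root_mem_fd {w : ℍ} (hw_fd : w ∈ 𝒟) (hw : F.eval (w : ℂ) 1 = 0)
    (ha : F.a ≠ 0) : F.CoeffLE (3 * F.disc ^ 2) := by
  have h_im : (w : ℂ).im ≠ 0 := w.im_pos.ne'
  have h_disc := neg_disc_eq_of_eval_eq_zero hw h_im
  have h_disc_one : 1 ≤ -(F.disc : ℝ) := by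
    have h_pos : 0 < -(F.disc : ℝ) := by rw [h_disc]; positivity
    exact_mod_cast Int.add_one_le_iff.2 (show 0 < -F.disc by exact_mod_cast h_pos)
  have ha_sq : (1 : ℝ) ≤ (F.a : ℝ) ^ 2 := by
    exact_mod_cast Int.add_one_le_iff.2 (sq_pos_of_ne_zero ha)
  obtain ⟨h_norm, hu : |(w : ℂ).re| ≤ 1 / 2⟩ := hw_fd
  rw [Complex.normSq_apply, ← sq, ← sq] at h_norm
  have h_bounds := coeff_bounds_of_mem_fundamentalDomain ha_sq h_disc_one hu h_norm h_disc
  obtain ⟨hc, hd⟩ := coeffs_eq_of_eval_eq_zero hw h_im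
  rw [neg_sq, ← hd, ← hc, add_sub_cancel_right] at h_bounds
  exact_mod_cast h_bounds

theorem exists_subst_coeffLE (hF : ∀ p q : ℤ, IsCoprime p q → F.eval p q ≠ 0) {z : ℍ}
    (hz : F.eval (z : ℂ) 1 = 0) :
    ∃ (G : BinaryCubicForm) (γ : SL(2, ℤ)), F = G.subst γ ∧ G.CoeffLE (3 * F.disc ^ 2) := by
  obtain ⟨γ, hγ⟩ := ModularGroup.exists_smul_mem_fd z
  set G := F.subst (γ⁻¹ : SL(2, ℤ)) with hG
  have h_subst : G.subst γ = F := subst_inv_subst γ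
  have h_disc : G.disc = F.disc := by
    rw [hG, disc_subst, Matrix.SpecialLinearGroup.det_coe, one_pow, one_mul]
  have h_root : G.eval ((γ • z : ℍ) : ℂ) 1 = 0 := by
    have h_denom : (γ 1 0 * z + γ 1 1 : ℂ) ≠ 0 := by
      simpa [denom] using denom_ne_zero γ z
    have h_num : (γ 0 0 * z + γ 0 1 : ℂ) = (γ 1 0 * z + γ 1 1) * ((γ • z : ℍ) : ℂ) := by
      rw [specialLinearGroup_apply]
      simp [mul_div_cancel₀ _ h_denom]
    rw [← h_subst, eval_subst, mul_one, mul_one, h_num, ← mul_one (γ 1 0 * z + γ 1 1 : ℂ),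
      mul_assoc, one_mul, eval_mul_mul] at hz
    exact (mul_eq_zero.1 hz).resolve_left (pow_ne_zero 3 h_denom)
  have h_lead : G.a ≠ 0 :=
    hF _ _ ⟨γ⁻¹ 1 1, -γ⁻¹ 0 1, by linear_combination (Matrix.det_fin_two _).symm.trans γ⁻¹.2⟩
  exact ⟨G, γ, h_subst.symm, h_disc ▸ coeffLE_of_root_mem_fd hγ h_root h_lead⟩

end BinaryCubicForm

/-- The binary cubic form `X³ - 3 x X Y² + 2 y Y³`, of discriminant `108 (x³ - y²)`, that Mordell
attaches to a point `(x, y)`. -/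
def mordellForm (x y : ℤ) : BinaryCubicForm :=
  ⟨1, 0, -3 * x, 2 * y⟩

theorem eval_mordellForm {S : Type*} [CommRing S] (x y : ℤ) (p q : S) :
    (mordellForm x y).eval p q = p ^ 3 - 3 * x * p * q ^ 2 + 2 * y * q ^ 3 := by
  simp only [mordellForm, BinaryCubicForm.eval]
  push_cast
  ring

theorem disc_mordellForm (x y : ℤ) : (mordellForm x y).disc = 108 * (x ^ 3 - y ^ 2) := by
  simp only [mordellForm, BinaryCubicForm.disc]
  ring

theorem hessian_mordellForm_one_zero (x y : ℤ) : (mordellForm x y).hessian 1 0 = 9 * x := by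
  simp only [mordellForm, BinaryCubicForm.hessian]
  ring

section NoIntegralRoot

variable {x y : ℤ}

theorem eval_mordellForm_ne_zero_of_isCoprime (h : ∀ t : ℤ, (mordellForm x y).eval t 1 ≠ 0)
    {p q : ℤ} (hpq : IsCoprime p q) : (mordellForm x y).eval p q ≠ 0 := by
  intro h_zero
  have h_dvd : q ∣ p ^ 3 := by
    rw [eval_mordellForm, Int.cast_id, Int.cast_id] at h_zero
    exact ⟨3 * x * p * q - 2 * y * q ^ 2, by linear_combination h_zero⟩
  have h_sq : q * q = 1 := by
    have h_unit : IsUnit q := hpq.pow_left.symm.isUnit_of_dvd' dvd_rfl h_dvd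
    exact Int.isUnit_mul_self h_unit
  refine h (q * p) ?_
  rw [← h_sq, BinaryCubicForm.eval_mul_mul, h_zero, mul_zero]

theorem exists_root_mordellForm_im_pos (h : x ^ 3 < y ^ 2) :
    ∃ z : UpperHalfPlane, (mordellForm x y).eval (z : ℂ) 1 = 0 := by
  have h_disc : (0 : ℝ) < 4 * ((-3 * x : ℤ) : ℝ) ^ 3 + 27 * ((2 * y : ℤ) : ℝ) ^ 2 := by
    exact_mod_cast (by linarith : 0 < 4 * (-3 * x) ^ 3 + 27 * (2 * y) ^ 2)
  obtain ⟨z, hz_im, hz⟩ := exists_root_depressedCubic_im_pos h_disc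
  refine ⟨⟨z, hz_im⟩, ?_⟩
  rw [eval_mordellForm]
  push_cast at hz
  linear_combination hz

theorem finite_mordellForm_eval_eq_one (h : ∀ t : ℤ, (mordellForm x y).eval t 1 ≠ 0)
    (h_disc : x ^ 3 < y ^ 2) : {t : ℤ × ℤ | (mordellForm x y).eval t.1 t.2 = 1}.Finite := by
  have h_irr : Irreducible (depressedCubic ((-3 * x : ℤ) : ℚ) (2 * y : ℤ)) := by
    refine irreducible_depressedCubic_of_forall_int fun t ht ↦ h t ?_
    rw [eval_mordellForm]
    simp only [Int.cast_id]
    linear_combination ht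
  refine (finite_depressedCubic_thue h_irr (by linarith)).subset fun t ht ↦ ?_
  rw [Set.mem_ofPred_eq, eval_mordellForm] at ht
  simp only [Int.cast_id] at ht
  rw [Set.mem_ofPred_eq]
  linear_combination ht

end NoIntegralRoot

/-- The integral solutions of the Mordell equation `y² = x³ + D`. -/
def mordellSolutions (D : ℤ) : Set (ℤ × ℤ) :=
  {p | p.2 ^ 2 = p.1 ^ 3 + D}

theorem finite_mordellForm_eq_subst {D : ℤ} (hD : 0 < D) (G : BinaryCubicForm) :
    {x : ℤ | ∃ y : ℤ, (x, y) ∈ mordellSolutions D ∧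
      (∀ t : ℤ, (mordellForm x y).eval t 1 ≠ 0) ∧
      ∃ γ : SL(2, ℤ), mordellForm x y = G.subst γ}.Finite := by
  rcases Set.eq_empty_or_nonempty {x : ℤ | ∃ y : ℤ, (x, y) ∈ mordellSolutions D ∧
      (∀ t : ℤ, (mordellForm x y).eval t 1 ≠ 0) ∧ ∃ γ : SL(2, ℤ), mordellForm x y = G.subst γ} with
    h_empty | ⟨x₀, y₀, h₀, h_root, γ₀, hγ₀⟩
  · exact h_empty ▸ Set.finite_empty
  have h_disc : x₀ ^ 3 < y₀ ^ 2 := by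
    have h_eq : y₀ ^ 2 = x₀ ^ 3 + D := h₀
    linarith
  have hG : (mordellForm x₀ y₀).subst (γ₀⁻¹ : SL(2, ℤ)) = G := by
    rw [hγ₀, ← BinaryCubicForm.subst_mul, ← Matrix.SpecialLinearGroup.coe_mul, mul_inv_cancel,
      Matrix.SpecialLinearGroup.coe_one, BinaryCubicForm.subst_one]
  have h_thue : {t : ℤ × ℤ | G.eval t.1 t.2 = 1}.Finite :=
    hG ▸ BinaryCubicForm.finite_subst_eval_eq_one
      (finite_mordellForm_eval_eq_one h_root h_disc) γ₀⁻¹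
  -- `x` is recovered from the solution `(γ₀₀, γ₁₀)` of `G = 1` because the Hessian is a covariant.
  refine (h_thue.image fun t ↦ G.hessian t.1 t.2 / 9).subset ?_
  rintro x ⟨y, -, -, γ, hγ⟩
  refine ⟨(γ 0 0, γ 1 0), (congrArg BinaryCubicForm.a hγ).symm, ?_⟩
  have h_hessian : G.hessian (γ 0 0) (γ 1 0) = 9 * x := by
    rw [← hessian_mordellForm_one_zero x y, hγ, BinaryCubicForm.hessian_subst,
      Matrix.SpecialLinearGroup.det_coe]
    simp
  exact Int.ediv_eq_of_eq_mul_right (by norm_num) h_hessian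

theorem abs_le_of_mordellForm_eval_eq_zero {D x y t : ℤ} (hD : 0 < D)
    (h : (x, y) ∈ mordellSolutions D) (ht : (mordellForm x y).eval t 1 = 0) : |x| ≤ 8 * D := by
  have hy : y ^ 2 = x ^ 3 + D := h
  simp only [eval_mordellForm, Int.cast_id] at ht
  have h_factor : (t ^ 2 - 4 * x) * (t ^ 2 - x) ^ 2 = 4 * D := by
    linear_combination (t ^ 3 - 3 * x * t - 2 * y) * ht + 4 * hy
  have h_le : ∀ d : ℤ, d ∣ 4 * D → |d| ≤ 4 * D := fun d hd ↦
    Int.le_of_dvd (by linarith) ((abs_dvd _ _).2 hd)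
  have h_left := abs_le.1 (h_le _ (Dvd.intro _ h_factor))
  have h_right := abs_le.1 (h_le (t ^ 2 - x)
    ⟨(t ^ 2 - 4 * x) * (t ^ 2 - x), by rw [← h_factor]; ring⟩)
  rw [abs_le]
  constructor <;> linarith

theorem finite_fst_mordellSolutions {D : ℤ} (hD : 0 < D) :
    (Prod.fst '' mordellSolutions D).Finite := by
  refine ((Set.finite_Icc (-(8 * D)) (8 * D)).union <|
    (BinaryCubicForm.finite_setOf_coeffLE (3 * (108 * -D) ^ 2)).biUnion fun G _ ↦
      finite_mordellForm_eq_subst hD G).subset ?_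
  rintro _ ⟨⟨x, y⟩, h, rfl⟩
  have hD_eq : y ^ 2 = x ^ 3 + D := h
  by_cases h_root : ∀ t : ℤ, (mordellForm x y).eval t 1 ≠ 0
  · obtain ⟨z, hz⟩ := exists_root_mordellForm_im_pos (x := x) (y := y) (by linarith)
    obtain ⟨G, γ, hγ, hG⟩ := BinaryCubicForm.exists_subst_coeffLE
      (fun _ _ ↦ eval_mordellForm_ne_zero_of_isCoprime h_root) hz
    rw [disc_mordellForm, hD_eq, sub_add_cancel_left] at hG
    exact .inr (Set.mem_biUnion hG ⟨y, h, h_root, γ, hγ⟩)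
  · push Not at h_root
    obtain ⟨t, ht⟩ := h_root
    exact .inl (abs_le.1 (abs_le_of_mordellForm_eval_eq_zero hD h ht))

theorem finite_mordellSolutions {D : ℤ} (hD : 0 < D) : (mordellSolutions D).Finite := by
  refine .of_finite_fibers Prod.fst (finite_fst_mordellSolutions hD) fun x _ ↦ ?_
  have h_sq : {y : ℤ | y ^ 2 = x ^ 3 + D}.Finite :=
    (nthRoots 2 (x ^ 3 + D)).toFinset.finite_toSet.subset fun y hy ↦ by
      simpa [mem_nthRoots] using hy
  refine .of_finite_image (f := Prod.snd) (h_sq.subset ?_) ?_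
  · rintro _ ⟨⟨_, y⟩, ⟨hy, rfl⟩, rfl⟩
    exact hy
  · rintro ⟨_, y⟩ ⟨-, rfl⟩ ⟨_, y'⟩ ⟨-, h⟩ rfl
    exact Prod.ext h.symm rfl

end BinaryCubicForms

section Heights

open WeierstrassCurve.Affine

/-- The Mordell curve `y² = x³ + k` as a Weierstrass curve. -/
def mordellCurve {F : Type*} [Field F] (k : F) : WeierstrassCurve.Affine F :=
  ⟨0, 0, 0, 0, k⟩

section Field

variable {F : Type*} [Field F] {k x y x₁ y₁ x₂ y₂ : F}

theorem mordellCurve_equation_iff : (mordellCurve k).Equation x y ↔ y ^ 2 = x ^ 3 + k := by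
  simp [equation_iff, mordellCurve]

theorem mordellCurve_nonsingular [CharZero F] (hk : k ≠ 0) (h : y ^ 2 = x ^ 3 + k) :
    (mordellCurve k).Nonsingular x y := by
  refine (equation_iff_nonsingular_of_Δ_ne_zero ?_).1 (mordellCurve_equation_iff.2 h)
  simp [mordellCurve, WeierstrassCurve.Δ, WeierstrassCurve.b₂, WeierstrassCurve.b₄,
    WeierstrassCurve.b₆, WeierstrassCurve.b₈, hk]

theorem mordellCurve_negY : (mordellCurve k).negY x y = -y := by
  simp [negY, mordellCurve]

theorem mordellCurve_addX (l : F) : (mordellCurve k).addX x₁ x₂ l = l ^ 2 - x₁ - x₂ := by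
  simp [addX, mordellCurve]

theorem mordellCurve_slope_self [DecidableEq F] (hy : y ≠ -y) :
    (mordellCurve k).slope x x y y = 3 * x ^ 2 / (2 * y) := by
  rw [slope_of_Y_ne rfl (mordellCurve_negY (k := k) ▸ hy), mordellCurve_negY]
  simp [mordellCurve, two_mul]

theorem chord_addX_eq {a₁ b₁ d₁ a₂ b₂ d₂ : F} (hd₁ : d₁ ≠ 0) (hd₂ : d₂ ≠ 0)
    (h₁ : b₁ ^ 2 = a₁ ^ 3 + k * d₁ ^ 6) (h₂ : b₂ ^ 2 = a₂ ^ 3 + k * d₂ ^ 6)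
    (h_ne : a₁ * d₂ ^ 2 - a₂ * d₁ ^ 2 ≠ 0) :
    ((b₁ / d₁ ^ 3 - b₂ / d₂ ^ 3) / (a₁ / d₁ ^ 2 - a₂ / d₂ ^ 2)) ^ 2 - a₁ / d₁ ^ 2 - a₂ / d₂ ^ 2 =
      (a₁ * a₂ * (a₁ * d₂ ^ 2 + a₂ * d₁ ^ 2) + 2 * k * d₁ ^ 4 * d₂ ^ 4 - 2 * b₁ * b₂ * d₁ * d₂) /
        (a₁ * d₂ ^ 2 - a₂ * d₁ ^ 2) ^ 2 := by
  have h_slope : (b₁ / d₁ ^ 3 - b₂ / d₂ ^ 3) / (a₁ / d₁ ^ 2 - a₂ / d₂ ^ 2) =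
      (b₁ * d₂ ^ 3 - b₂ * d₁ ^ 3) / (d₁ * d₂ * (a₁ * d₂ ^ 2 - a₂ * d₁ ^ 2)) := by
    rw [div_sub_div _ _ (pow_ne_zero 3 hd₁) (pow_ne_zero 3 hd₂),
      div_sub_div _ _ (pow_ne_zero 2 hd₁) (pow_ne_zero 2 hd₂), mul_comm (d₁ ^ 2) a₂]
    field_simp
  rw [h_slope]
  generalize he : a₁ * d₂ ^ 2 - a₂ * d₁ ^ 2 = e at h_ne
  field_simp
  rw [← he]
  linear_combination d₂ ^ 6 * h₁ + d₁ ^ 6 * h₂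

theorem tangent_addX_eq {a b d : F} (hd : d ≠ 0) (h : b ^ 2 = a ^ 3 + k * d ^ 6)
    (hb : 2 * b ≠ 0) :
    (3 * (a / d ^ 2) ^ 2 / (2 * (b / d ^ 3))) ^ 2 - a / d ^ 2 - a / d ^ 2 =
      a * (a ^ 3 - 8 * k * d ^ 6) / (2 * d * b) ^ 2 := by
  have h_two : (2 : F) ≠ 0 := left_ne_zero_of_mul hb
  have hb' : b ≠ 0 := right_ne_zero_of_mul hb
  field_simp
  linear_combination -8 * a * h

end Field

section Bounds

variable {k H a b d a₁ b₁ d₁ a₂ b₂ d₂ : ℤ}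

theorem sq_le_of_sq_eq_cube_add (h : b ^ 2 = a ^ 3 + k * d ^ 6) (ha : |a| ≤ H ^ 2)
    (hd : |d| ≤ H) : b ^ 2 ≤ (1 + |k|) * H ^ 6 := by
  calc b ^ 2 = a ^ 3 + k * d ^ 6 := h
    _ ≤ |a| ^ 3 + |k| * |d| ^ 6 := by
      rw [← abs_pow, ← abs_pow, ← abs_mul]
      exact add_le_add (le_abs_self _) (le_abs_self _)
    _ ≤ (H ^ 2) ^ 3 + |k| * H ^ 6 := by gcongr
    _ = (1 + |k|) * H ^ 6 := by ring

theorem abs_chord_numerator_le (h₁ : b₁ ^ 2 = a₁ ^ 3 + k * d₁ ^ 6)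
    (h₂ : b₂ ^ 2 = a₂ ^ 3 + k * d₂ ^ 6) (ha₁ : |a₁| ≤ H ^ 2) (hd₁ : |d₁| ≤ H)
    (ha₂ : |a₂| ≤ H ^ 2) (hd₂ : |d₂| ≤ H) :
    |a₁ * a₂ * (a₁ * d₂ ^ 2 + a₂ * d₁ ^ 2) + 2 * k * d₁ ^ 4 * d₂ ^ 4 - 2 * b₁ * b₂ * d₁ * d₂| ≤
      4 * (1 + |k|) * H ^ 8 := by
  have hH : 0 ≤ H := (abs_nonneg d₁).trans hd₁
  have h_left : |a₁ * a₂ * (a₁ * d₂ ^ 2 + a₂ * d₁ ^ 2)| ≤ 2 * H ^ 8 := by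
    calc |a₁ * a₂ * (a₁ * d₂ ^ 2 + a₂ * d₁ ^ 2)|
        ≤ |a₁| * |a₂| * (|a₁| * |d₂| ^ 2 + |a₂| * |d₁| ^ 2) := by
          rw [← abs_pow, ← abs_pow, ← abs_mul, ← abs_mul, ← abs_mul, abs_mul (a₁ * a₂)]
          gcongr
          exact abs_add_le _ _
      _ ≤ H ^ 2 * H ^ 2 * (H ^ 2 * H ^ 2 + H ^ 2 * H ^ 2) := by gcongr
      _ = 2 * H ^ 8 := by ring
  have h_mid : |2 * k * d₁ ^ 4 * d₂ ^ 4| ≤ 2 * |k| * H ^ 8 := by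
    calc |2 * k * d₁ ^ 4 * d₂ ^ 4| = 2 * |k| * |d₁| ^ 4 * |d₂| ^ 4 := by
          rw [abs_mul, abs_mul, abs_mul, abs_pow, abs_pow, abs_two]
      _ ≤ 2 * |k| * H ^ 4 * H ^ 4 := by gcongr
      _ = 2 * |k| * H ^ 8 := by ring
  have h_right : |2 * b₁ * b₂ * d₁ * d₂| ≤ 2 * (1 + |k|) * H ^ 8 := by
    have hb : |2 * b₁ * b₂| ≤ 2 * ((1 + |k|) * H ^ 6) := by
      have hb₁ := sq_le_of_sq_eq_cube_add h₁ ha₁ hd₁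
      have hb₂ := sq_le_of_sq_eq_cube_add h₂ ha₂ hd₂
      rw [abs_le]
      constructor <;> nlinarith [sq_nonneg (b₁ + b₂), sq_nonneg (b₁ - b₂)]
    calc |2 * b₁ * b₂ * d₁ * d₂| = |2 * b₁ * b₂| * |d₁| * |d₂| := by rw [abs_mul, abs_mul]
      _ ≤ 2 * ((1 + |k|) * H ^ 6) * H * H := by gcongr
      _ = 2 * (1 + |k|) * H ^ 8 := by ring
  refine (abs_sub _ _).trans ((add_le_add_left (abs_add_le _ _) _).trans ?_)
  linarith

theorem abs_chord_denominator_le (ha₁ : |a₁| ≤ H ^ 2) (hd₁ : |d₁| ≤ H) (ha₂ : |a₂| ≤ H ^ 2)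
    (hd₂ : |d₂| ≤ H) : |a₁ * d₂ ^ 2 - a₂ * d₁ ^ 2| ≤ 2 * H ^ 4 := by
  calc |a₁ * d₂ ^ 2 - a₂ * d₁ ^ 2| ≤ |a₁| * |d₂| ^ 2 + |a₂| * |d₁| ^ 2 := by
        rw [← abs_pow, ← abs_pow, ← abs_mul, ← abs_mul]
        exact abs_sub _ _
    _ ≤ H ^ 2 * H ^ 2 + H ^ 2 * H ^ 2 := by gcongr
    _ = 2 * H ^ 4 := by ring

theorem abs_tangent_numerator_le (ha : |a| ≤ H ^ 2) (hd : |d| ≤ H) :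
    |a * (a ^ 3 - 8 * k * d ^ 6)| ≤ (1 + 8 * |k|) * H ^ 8 := by
  calc |a * (a ^ 3 - 8 * k * d ^ 6)| ≤ |a| * (|a| ^ 3 + 8 * |k| * |d| ^ 6) := by
        rw [abs_mul]
        gcongr
        refine (abs_sub _ _).trans_eq ?_
        rw [abs_mul, abs_mul, abs_pow, abs_pow, Nat.abs_ofNat]
    _ ≤ H ^ 2 * ((H ^ 2) ^ 3 + 8 * |k| * H ^ 6) := by gcongr
    _ = (1 + 8 * |k|) * H ^ 8 := by ring

theorem sq_tangent_denominator_le (h : b ^ 2 = a ^ 3 + k * d ^ 6) (ha : |a| ≤ H ^ 2)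
    (hd : |d| ≤ H) : (2 * d * b) ^ 2 ≤ 4 * (1 + |k|) * H ^ 8 := by
  have hb : b ^ 2 ≤ (1 + |k|) * H ^ 6 := sq_le_of_sq_eq_cube_add h ha hd
  calc (2 * d * b) ^ 2 = 4 * |d| ^ 2 * b ^ 2 := by rw [sq_abs]; ring
    _ ≤ 4 * H ^ 2 * ((1 + |k|) * H ^ 6) := by gcongr
    _ = 4 * (1 + |k|) * H ^ 8 := by ring

end Bounds

theorem exists_int_eq_of_pow_eq {r : ℚ} {n : ℕ} {m : ℤ} (hn : n ≠ 0) (h : r ^ n = m) :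
    ∃ s : ℤ, r = s := by
  obtain ⟨s, hs⟩ := IsIntegrallyClosed.exists_algebraMap_eq_of_isIntegral_pow (R := ℤ)
    (Nat.pos_of_ne_zero hn)
    (h ▸ isIntegral_algebraMap (R := ℤ) (A := ℚ) (x := m) : IsIntegral ℤ (r ^ n))
  exact ⟨s, hs.symm⟩

variable {k H H' : ℤ}

theorem exists_int_eq_div_cube {y : ℚ} {a d : ℤ} (hd : d ≠ 0)
    (h : y ^ 2 = (a / d ^ 2 : ℚ) ^ 3 + k) :
    ∃ b : ℤ, y = b / d ^ 3 ∧ b ^ 2 = a ^ 3 + k * d ^ 6 := by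
  have hd' : (d : ℚ) ≠ 0 := Int.cast_ne_zero.2 hd
  have h_sq : (y * d ^ 3) ^ 2 = ((a ^ 3 + k * d ^ 6 : ℤ) : ℚ) := by
    rw [mul_pow, h]
    push_cast
    field_simp
  obtain ⟨b, hb⟩ := exists_int_eq_of_pow_eq two_ne_zero h_sq
  refine ⟨b, eq_div_of_mul_eq (pow_ne_zero 3 hd') hb, ?_⟩
  rw [hb] at h_sq
  exact_mod_cast h_sq

/-- A point of `y² = x³ + k` has exponential height at most `H` if its `x`-coordinate is `a / d²`
with `|a| ≤ H²` and `|d| ≤ H`; the fraction need not be reduced. -/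
def HeightLE (H : ℤ) : (mordellCurve (k : ℚ)).Point → Prop
  | .zero => True
  | .some x _ _ => ∃ a d : ℤ, d ≠ 0 ∧ x = a / d ^ 2 ∧ |a| ≤ H ^ 2 ∧ |d| ≤ H

namespace HeightLE

variable {P Q : (mordellCurve (k : ℚ)).Point}

theorem zero : HeightLE H (0 : (mordellCurve (k : ℚ)).Point) :=
  trivial

theorem mono (h : H ≤ H') (hP : HeightLE H P) : HeightLE H' P := by
  rcases P with _ | ⟨x, y, hxy⟩
  · trivial
  · obtain ⟨a, d, hd, hx, ha, hdH⟩ := hP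
    have hH : 0 ≤ H := (abs_nonneg d).trans hdH
    exact ⟨a, d, hd, hx, ha.trans (by gcongr), hdH.trans h⟩

theorem exists_of_some {x y : ℚ} {hxy : (mordellCurve (k : ℚ)).Nonsingular x y}
    (h : HeightLE H (.some x y hxy)) :
    ∃ a b d : ℤ, d ≠ 0 ∧ x = a / d ^ 2 ∧ y = b / d ^ 3 ∧ b ^ 2 = a ^ 3 + k * d ^ 6 ∧
      |a| ≤ H ^ 2 ∧ |d| ≤ H := by
  obtain ⟨a, d, hd, rfl, ha, hdH⟩ := h
  obtain ⟨b, hy, hb⟩ := exists_int_eq_div_cube hd (mordellCurve_equation_iff.1 hxy.1)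
  exact ⟨a, b, d, hd, rfl, hy, hb, ha, hdH⟩

theorem add_of_X_ne {x₁ y₁ x₂ y₂ : ℚ} {h₁ : (mordellCurve (k : ℚ)).Nonsingular x₁ y₁}
    {h₂ : (mordellCurve (k : ℚ)).Nonsingular x₂ y₂} (hP : HeightLE H (.some x₁ y₁ h₁))
    (hQ : HeightLE H (.some x₂ y₂ h₂)) (hx : x₁ ≠ x₂) :
    HeightLE (8 * (1 + |k|) * H ^ 4) (Point.some x₁ y₁ h₁ + .some x₂ y₂ h₂) := by
  obtain ⟨a₁, b₁, d₁, hd₁, rfl, rfl, hb₁, ha₁, hdH₁⟩ := hP.exists_of_some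
  obtain ⟨a₂, b₂, d₂, hd₂, rfl, rfl, hb₂, ha₂, hdH₂⟩ := hQ.exists_of_some
  have hd₁' : (d₁ : ℚ) ≠ 0 := Int.cast_ne_zero.2 hd₁
  have hd₂' : (d₂ : ℚ) ≠ 0 := Int.cast_ne_zero.2 hd₂
  have h_ne : a₁ * d₂ ^ 2 - a₂ * d₁ ^ 2 ≠ 0 := fun h ↦ hx <| by
    rw [div_eq_div_iff (pow_ne_zero 2 hd₁') (pow_ne_zero 2 hd₂')]
    exact_mod_cast sub_eq_zero.1 h
  have h_one : 1 ≤ 1 + |k| := le_add_of_nonneg_right (abs_nonneg k)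
  rw [Point.add_of_X_ne hx]
  refine ⟨a₁ * a₂ * (a₁ * d₂ ^ 2 + a₂ * d₁ ^ 2) + 2 * k * d₁ ^ 4 * d₂ ^ 4 - 2 * b₁ * b₂ * d₁ * d₂,
    _, h_ne, ?_, ?_, ?_⟩
  · rw [mordellCurve_addX, slope_of_X_ne hx]
    push_cast
    exact chord_addX_eq hd₁' hd₂' (by exact_mod_cast hb₁) (by exact_mod_cast hb₂)
      (by exact_mod_cast h_ne)
  · calc _ ≤ 4 * (1 + |k|) * H ^ 8 := abs_chord_numerator_le hb₁ hb₂ ha₁ hdH₁ ha₂ hdH₂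
      _ ≤ 64 * (1 + |k|) ^ 2 * H ^ 8 := by gcongr ?_ * _; nlinarith
      _ = _ := by ring
  · calc _ ≤ 2 * H ^ 4 := abs_chord_denominator_le ha₁ hdH₁ ha₂ hdH₂
      _ ≤ 8 * (1 + |k|) * H ^ 4 := by gcongr; linarith

theorem add_self_of_Y_ne {x y : ℚ} {h : (mordellCurve (k : ℚ)).Nonsingular x y}
    (hP : HeightLE H (.some x y h)) (hy : y ≠ -y) :
    HeightLE (8 * (1 + |k|) * H ^ 4) (Point.some x y h + .some x y h) := by
  obtain ⟨a, b, d, hd, rfl, rfl, hb, ha, hdH⟩ := hP.exists_of_some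
  have hd' : (d : ℚ) ≠ 0 := Int.cast_ne_zero.2 hd
  have hb_ne : b ≠ 0 := by
    rintro rfl
    simp at hy
  have h_one : 1 ≤ 1 + |k| := le_add_of_nonneg_right (abs_nonneg k)
  rw [Point.add_of_Y_ne (mordellCurve_negY (k := (k : ℚ)) ▸ hy)]
  refine ⟨a * (a ^ 3 - 8 * k * d ^ 6), 2 * d * b, by simp [hd, hb_ne], ?_, ?_, ?_⟩
  · rw [mordellCurve_addX, mordellCurve_slope_self hy]
    push_cast
    exact tangent_addX_eq hd' (by exact_mod_cast hb) (by simpa using hb_ne)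
  · calc _ ≤ (1 + 8 * |k|) * H ^ 8 := abs_tangent_numerator_le ha hdH
      _ ≤ 64 * (1 + |k|) ^ 2 * H ^ 8 := by gcongr ?_ * _; nlinarith
      _ = _ := by ring
  · refine abs_le_of_sq_le_sq ?_ (by positivity)
    calc _ ≤ 4 * (1 + |k|) * H ^ 8 := sq_tangent_denominator_le hb ha hdH
      _ ≤ 64 * (1 + |k|) ^ 2 * H ^ 8 := by gcongr ?_ * _; nlinarith
      _ = _ := by ring

theorem add (hH : 1 ≤ H) (hP : HeightLE H P) (hQ : HeightLE H Q) :
    HeightLE (8 * (1 + |k|) * H ^ 4) (P + Q) := by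
  have h_le : H ≤ 8 * (1 + |k|) * H ^ 4 := by
    calc H ≤ H ^ 4 := le_self_pow₀ hH (by norm_num)
      _ ≤ 8 * (1 + |k|) * H ^ 4 :=
        le_mul_of_one_le_left (by positivity) (by linarith [abs_nonneg k])
  rcases P with _ | ⟨x₁, y₁, h₁⟩
  · exact (zero_add Q).symm ▸ hQ.mono h_le
  rcases Q with _ | ⟨x₂, y₂, h₂⟩
  · exact (add_zero (Point.some x₁ y₁ h₁)).symm ▸ hP.mono h_le
  by_cases hx : x₁ = x₂
  · subst hx
    by_cases hy : y₁ = (mordellCurve (k : ℚ)).negY x₁ y₂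
    · exact (Point.add_of_Y_eq rfl hy).symm ▸ zero
    · obtain rfl : y₁ = y₂ := Y_eq_of_Y_ne h₁.1 h₂.1 rfl hy
      exact hP.add_self_of_Y_ne (mordellCurve_negY (k := (k : ℚ)) ▸ hy)
  · exact hP.add_of_X_ne hQ hx

end HeightLE

theorem exists_heightLE (P : (mordellCurve (k : ℚ)).Point) : ∃ H : ℤ, 1 ≤ H ∧ HeightLE H P := by
  rcases P with _ | ⟨x, y, hxy⟩
  · exact ⟨1, le_rfl, trivial⟩
  have hx : x = (x.num * x.den : ℤ) / (x.den : ℤ) ^ 2 := by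
    have h_den : (x.den : ℚ) ≠ 0 := by exact_mod_cast x.den_ne_zero
    conv_lhs => rw [← Rat.num_div_den x]
    push_cast
    field_simp
  have h_den : 1 ≤ (x.den : ℤ) := by exact_mod_cast x.den_pos
  refine ⟨|x.num * x.den| + x.den, by linarith [abs_nonneg (x.num * x.den)],
    x.num * x.den, x.den, by exact_mod_cast x.den_ne_zero, hx, ?_, ?_⟩
  · nlinarith [abs_nonneg (x.num * x.den)]
  · rw [abs_of_nonneg (by linarith)]
    linarith [abs_nonneg (x.num * x.den)]

theorem exists_forall_mem_heightLE {S : Set (mordellCurve (k : ℚ)).Point} (hS : S.Finite) :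
    ∃ H : ℤ, 1 ≤ H ∧ ∀ P ∈ S, HeightLE H P := by
  choose h _ hP using exists_heightLE (k := k)
  obtain ⟨B, hB⟩ := (hS.image h).bddAbove
  exact ⟨max 1 B, le_max_left _ _, fun P hPS ↦
    (hP P).mono (le_max_of_le_right (hB (Set.mem_image_of_mem h hPS)))⟩

-- Halving the coefficients `s` times raises the height to the power `4 ^ s = (2 ^ s) ^ 2` only.
theorem exists_forall_heightLE_sum_nsmul {ι : Type*} [Fintype ι]
    (P : ι → (mordellCurve (k : ℚ)).Point) :
    ∃ K : ℤ, 1 ≤ K ∧ ∀ (s : ℕ) (n : ι → ℕ), (∀ i, n i ≤ 2 ^ s) →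
      HeightLE (K ^ 4 ^ s) (∑ i, n i • P i) := by
  classical
  obtain ⟨H₀, hH₀, h_box⟩ := exists_forall_mem_heightLE
    ((Set.finite_Iic (1 : ι → ℕ)).image fun n ↦ ∑ i, n i • P i)
  set C := 8 * (1 + |k|)
  have hC_one : 1 ≤ C := by linarith [abs_nonneg k]
  suffices h : ∀ s : ℕ, ∃ H : ℤ, 1 ≤ H ∧ C * H ≤ (C * H₀) ^ 4 ^ s ∧
      ∀ n : ι → ℕ, (∀ i, n i ≤ 2 ^ s) → HeightLE H (∑ i, n i • P i) by
    refine ⟨C * H₀, one_le_mul_of_one_le_of_one_le hC_one hH₀, fun s n hn ↦ ?_⟩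
    obtain ⟨H, hH, h_le, h_height⟩ := h s
    exact (h_height n hn).mono ((le_mul_of_one_le_left (by linarith) hC_one).trans h_le)
  intro s
  induction s with
  | zero => exact ⟨H₀, hH₀, by simp, fun n hn ↦ h_box _ ⟨n, hn, rfl⟩⟩
  | succ s ih =>
    obtain ⟨H, hH, h_le, h_height⟩ := ih
    refine ⟨C * H ^ 4, one_le_mul_of_one_le_of_one_le hC_one (one_le_pow₀ hH), ?_, fun n hn ↦ ?_⟩
    · calc C * (C * H ^ 4) = C ^ 2 * H ^ 4 := by ring
        _ ≤ C ^ 4 * H ^ 4 := by gcongr; norm_num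
        _ = (C * H) ^ 4 := by ring
        _ ≤ ((C * H₀) ^ 4 ^ s) ^ 4 := by gcongr
        _ = (C * H₀) ^ 4 ^ (s + 1) := by rw [← pow_mul, pow_succ]
    · have h_split : ∑ i, n i • P i = ∑ i, (n i / 2) • P i + ∑ i, (n i - n i / 2) • P i := by
        simp_rw [← Finset.sum_add_distrib, ← add_nsmul, Nat.add_sub_of_le (Nat.div_le_self _ 2)]
      have hn' : ∀ i, n i ≤ 2 * 2 ^ s := fun i ↦ pow_succ' 2 s ▸ hn i
      rw [h_split]
      exact (h_height _ fun i ↦ by have := hn' i; omega).add hH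
        (h_height _ fun i ↦ by have := hn' i; omega)

end Heights

section Scaling

variable {k H : ℤ}

theorem HeightLE.exists_mem_mordellSolutions {P : (mordellCurve (k : ℚ)).Point}
    (hP : HeightLE H P) (hP_ne : P ≠ 0) :
    ∃ d : ℤ, d ≠ 0 ∧ |d| ≤ H ∧ ∀ M : ℤ, M ≠ 0 → d ∣ M →
      ∃ t ∈ mordellSolutions (k * M ^ 6),
        ∃ h : (mordellCurve (k : ℚ)).Nonsingular (t.1 / M ^ 2) (t.2 / M ^ 3), P = .some _ _ h := by
  rcases P with _ | ⟨x, y, hxy⟩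
  · exact absurd rfl hP_ne
  obtain ⟨a, b, d, hd, rfl, rfl, hb, -, hdH⟩ := hP.exists_of_some
  refine ⟨d, hd, hdH, ?_⟩
  rintro _ hM ⟨e, rfl⟩
  have hd' : (d : ℚ) ≠ 0 := Int.cast_ne_zero.2 hd
  have he : (e : ℚ) ≠ 0 := Int.cast_ne_zero.2 (right_ne_zero_of_mul hM)
  have h_fst : (a / d ^ 2 : ℚ) = (a * e ^ 2 : ℤ) / (d * e : ℤ) ^ 2 := by
    push_cast
    field_simp
  have h_snd : (b / d ^ 3 : ℚ) = (b * e ^ 3 : ℤ) / (d * e : ℤ) ^ 3 := by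
    push_cast
    field_simp
  refine ⟨(a * e ^ 2, b * e ^ 3), ?_, h_fst ▸ h_snd ▸ hxy, ?_⟩
  · rw [mordellSolutions, Set.mem_ofPred_eq]
    linear_combination e ^ 6 * hb
  · simp only [← h_fst, ← h_snd]

theorem exists_card_le_ncard_mordellSolutions (hk : 0 < k)
    {S : Finset (mordellCurve (k : ℚ)).Point} (hS : ∀ P ∈ S, HeightLE H P ∧ P ≠ 0) :
    ∃ M : ℤ, M ≠ 0 ∧ |M| ≤ H ^ S.card ∧ S.card ≤ (mordellSolutions (k * M ^ 6)).ncard := by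
  choose! d hd_ne hd_le hd using fun P hP ↦
    (hS P hP).1.exists_mem_mordellSolutions (hS P hP).2
  set M := ∏ P ∈ S, d P
  have hM : M ≠ 0 := Finset.prod_ne_zero_iff.2 hd_ne
  choose! t ht_mem ht_nonsing ht using fun P hP ↦ hd P hP M hM (Finset.dvd_prod_of_mem d hP)
  refine ⟨M, hM, ?_, ?_⟩
  · calc |M| = ∏ P ∈ S, |d P| := Finset.abs_prod _ _
      _ ≤ ∏ _P ∈ S, H := Finset.prod_le_prod (fun _ _ ↦ abs_nonneg _) hd_le
      _ = H ^ S.card := Finset.prod_const H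
  · rw [← Set.ncard_coe_finset S]
    refine Set.ncard_le_ncard_of_injOn t ht_mem (fun P hP Q hQ hPQ ↦ ?_)
      (finite_mordellSolutions (by positivity))
    rw [ht P hP, ht Q hQ]
    simp only [hPQ]

theorem exists_mordellSolutions_of_linearIndependent {ι : Type*} [Fintype ι] [Nonempty ι]
    (hk : 0 < k) {P : ι → (mordellCurve (k : ℚ)).Point} (hP : LinearIndependent ℤ P) :
    ∃ K : ℤ, 1 ≤ K ∧ ∀ s : ℕ, ∃ D : ℤ, 0 < D ∧
      D ≤ K ^ (2 ^ s) ^ (Fintype.card ι + 2) ∧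
      (2 ^ s) ^ Fintype.card ι ≤ (mordellSolutions D).ncard := by
  classical
  obtain ⟨K, hK, h_height⟩ := exists_forall_heightLE_sum_nsmul P
  have h_inj : Function.Injective fun n : ι → ℕ ↦ ∑ i, n i • P i := fun n m hnm ↦ by
    have h_eq := Fintype.linearIndependent_iffₛ.1 hP (fun i ↦ (n i : ℤ)) (fun i ↦ (m i : ℤ))
      (by simpa using hnm)
    exact funext fun i ↦ Int.ofNat_inj.1 (h_eq i)
  refine ⟨k * K ^ 6, one_le_mul_of_one_le_of_one_le hk (one_le_pow₀ hK), fun s ↦ ?_⟩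
  set S := (Fintype.piFinset fun _ : ι ↦ Finset.Icc 1 (2 ^ s)).map ⟨_, h_inj⟩ with hS
  have hS_card : S.card = (2 ^ s) ^ Fintype.card ι := by simp [hS]
  have hS_height : ∀ Q ∈ S, HeightLE (K ^ 4 ^ s) Q ∧ Q ≠ 0 := by
    simp only [hS, Finset.mem_map, Fintype.mem_piFinset, Finset.mem_Icc]
    rintro _ ⟨n, hn, rfl⟩
    refine ⟨h_height s n fun i ↦ (hn i).2, fun h_zero ↦ ?_⟩
    obtain ⟨i⟩ := ‹Nonempty ι›
    have hn_zero : n = 0 := h_inj (by simpa using h_zero)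
    simpa [hn_zero] using (hn i).1
  obtain ⟨M, hM, hM_le, h_card⟩ := exists_card_le_ncard_mordellSolutions hk hS_height
  refine ⟨k * M ^ 6, by positivity, ?_, hS_card ▸ h_card⟩
  have h_exp : 4 ^ s * (2 ^ s) ^ Fintype.card ι = (2 ^ s) ^ (Fintype.card ι + 2) := by
    rw [pow_add, mul_comm, pow_right_comm 2 s 2]
    norm_num
  rw [hS_card, ← pow_mul, h_exp] at hM_le
  calc k * M ^ 6 = k * |M| ^ 6 := by rw [← abs_pow, abs_of_nonneg (by positivity)]
    _ ≤ k ^ (2 ^ s) ^ (Fintype.card ι + 2) * (K ^ (2 ^ s) ^ (Fintype.card ι + 2)) ^ 6 := by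
      gcongr
      exact le_self_pow₀ hk (by positivity)
    _ = (k * K ^ 6) ^ (2 ^ s) ^ (Fintype.card ι + 2) := by
      rw [mul_pow, pow_right_comm K]

theorem exists_infinite_setOf_mul_rpow_lt {α : Type*} {L N : α → ℝ} {p q : ℕ} (hp : p ≠ 0)
    (hq : q ≠ 0) {C : ℝ} (hC : 0 < C)
    (h : ∀ s : ℕ, ∃ T : ℕ, s ≤ T ∧ ∃ a, 0 ≤ L a ∧ L a ≤ C * T ^ q ∧ (T : ℝ) ^ p ≤ N a) :
    ∃ c : ℝ, 0 < c ∧ {a | c * L a ^ ((p : ℝ) / q) < N a}.Infinite := by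
  set e : ℝ := (p : ℝ) / q with he
  have hCe : 0 < C ^ e := Real.rpow_pos_of_pos hC e
  refine ⟨(2 * C ^ e)⁻¹, inv_pos.2 (mul_pos two_pos hCe), fun h_fin ↦ ?_⟩
  obtain ⟨B, hB⟩ := (h_fin.image N).bddAbove
  obtain ⟨s, hs⟩ := exists_nat_gt (max B 0)
  obtain ⟨T, hsT, a, hL_nonneg, hL, hN⟩ := h s
  have hT : max B 0 < (T : ℝ) := hs.trans_le (by exact_mod_cast hsT)
  have hT_pos : 0 < T := by exact_mod_cast (le_max_right _ _).trans_lt hT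
  have hL_rpow : L a ^ e ≤ C ^ e * T ^ p := by
    calc L a ^ e ≤ (C * T ^ q) ^ e := by gcongr
      _ = C ^ e * T ^ p := by
        rw [Real.mul_rpow hC.le (by positivity), ← Real.rpow_natCast_mul (by positivity), he,
          mul_div_cancel₀ _ (by exact_mod_cast hq), Real.rpow_natCast]
  have h_mem : (2 * C ^ e)⁻¹ * L a ^ e < N a := by
    calc (2 * C ^ e)⁻¹ * L a ^ e ≤ (2 * C ^ e)⁻¹ * (C ^ e * T ^ p) := by gcongr
      _ = T ^ p / 2 := by field_simp
      _ < T ^ p := half_lt_self (by positivity)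
      _ ≤ N a := hN
  have h_le : N a ≤ B := hB (Set.mem_image_of_mem N h_mem)
  have hT_le : (T : ℝ) ≤ T ^ p := le_self_pow₀ (by exact_mod_cast hT_pos) hp
  linarith [le_max_left B 0]

theorem exists_infinite_setOf_log_rpow_lt_ncard {ι : Type*} [Fintype ι] [Nonempty ι]
    (hk : 0 < k) {P : ι → (mordellCurve (k : ℚ)).Point} (hP : LinearIndependent ℤ P) :
    ∃ c : ℝ, 0 < c ∧ {D : ℤ |
      c * Real.log |(D : ℝ)| ^ ((Fintype.card ι : ℝ) / (Fintype.card ι + 2 : ℕ)) <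
        (mordellSolutions D).ncard}.Infinite := by
  obtain ⟨K, hK, h⟩ := exists_mordellSolutions_of_linearIndependent hk hP
  have hK_log : 0 ≤ Real.log K := Real.log_nonneg (by exact_mod_cast hK)
  refine exists_infinite_setOf_mul_rpow_lt Fintype.card_ne_zero (by omega)
    (C := Real.log K + 1) (by linarith [hK_log]) fun s ↦ ?_
  obtain ⟨D, hD, hD_le, h_card⟩ := h s
  have hD_one : (1 : ℝ) ≤ D := by exact_mod_cast hD
  have hD_le' : (D : ℝ) ≤ K ^ (2 ^ s) ^ (Fintype.card ι + 2) := by exact_mod_cast hD_le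
  refine ⟨2 ^ s, Nat.lt_two_pow_self.le, D, ?_, ?_, by exact_mod_cast h_card⟩
  · rw [Real.log_abs]
    exact Real.log_nonneg hD_one
  · calc Real.log |(D : ℝ)| = Real.log D := Real.log_abs _
      _ ≤ Real.log (K ^ (2 ^ s) ^ (Fintype.card ι + 2)) := by gcongr
      _ = Real.log K * ((2 ^ s : ℕ) : ℝ) ^ (Fintype.card ι + 2) := by
        rw [Real.log_pow, mul_comm]
        push_cast
        rfl
      _ ≤ (Real.log K + 1) * ((2 ^ s : ℕ) : ℝ) ^ (Fintype.card ι + 2) := by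
        gcongr
        linarith

end Scaling

section Descent

open WeierstrassCurve.Affine

theorem linearIndependent_int_of_linearIndependent_zmod {ℓ : ℕ} (hℓ : 1 < ℓ) {G V ι : Type*}
    [AddCommGroup G] [AddCommGroup V] [Module (ZMod ℓ) V] (h_tors : ∀ g : G, ℓ • g = 0 → g = 0)
    (φ : G →+ V) {P : ι → G} (h : LinearIndependent (ZMod ℓ) (φ ∘ P)) : LinearIndependent ℤ P := by
  rw [linearIndependent_iff']
  intro s m hm i hi
  have h_dvd : ∀ n : ℕ, ∀ m : ι → ℤ, ∑ i ∈ s, m i • P i = 0 → ∀ i ∈ s, (ℓ : ℤ) ^ n ∣ m i := by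
    intro n
    induction n with
    | zero => simp
    | succ n ih =>
      intro m hm
      have h_zmod : ∑ i ∈ s, (m i : ZMod ℓ) • (φ ∘ P) i = 0 := by
        simpa [map_sum, Int.cast_smul_eq_zsmul] using congrArg φ hm
      have h_quot : ∀ i ∈ s, (ℓ : ℤ) * (m i / ℓ) = m i := fun i hi ↦ Int.mul_ediv_cancel' <|
        (ZMod.intCast_zmod_eq_zero_iff_dvd _ ℓ).1 (linearIndependent_iff'.1 h s _ h_zmod i hi)
      have h_sum : ∑ i ∈ s, (m i / ℓ) • P i = 0 := by
        refine h_tors _ ?_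
        rw [← hm, Finset.smul_sum]
        refine Finset.sum_congr rfl fun i hi ↦ ?_
        rw [← natCast_zsmul, smul_smul, h_quot i hi]
      intro i hi
      rw [← h_quot i hi, pow_succ']
      exact mul_dvd_mul_left _ (ih _ h_sum i hi)
  refine Int.eq_zero_of_abs_lt_dvd (h_dvd (m i).natAbs m hm i hi) ?_
  rw [Int.abs_eq_natAbs]
  exact_mod_cast Nat.lt_pow_self hℓ

theorem cube_ne_neg_intCast {k L : ℤ} (h_lt : L ^ 3 < k) (lt_h : k < (L + 1) ^ 3) (x : ℚ) :
    x ^ 3 ≠ -k := by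
  intro h
  have h_neg : (-x) ^ 3 = k := by rw [Odd.neg_pow (by decide), h, neg_neg]
  obtain ⟨n, hn⟩ := exists_int_eq_of_pow_eq three_ne_zero h_neg
  obtain rfl : n ^ 3 = k := by
    rw [hn] at h_neg
    exact_mod_cast h_neg
  have h_mono : StrictMono fun n : ℤ ↦ n ^ 3 := Odd.strictMono_pow (by decide)
  have := h_mono.lt_iff_lt.1 h_lt
  have := h_mono.lt_iff_lt.1 lt_h
  omega

section Field

variable {F : Type*} [Field F] [DecidableEq F] {k : F}

theorem mordellCurve_eq_zero_of_two_nsmul_eq_zero [CharZero F] (hk : ∀ x : F, x ^ 3 ≠ -k)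
    {P : (mordellCurve k).Point} (hP : 2 • P = 0) : P = 0 := by
  rw [two_nsmul, add_eq_zero_iff_eq_neg] at hP
  rcases P with _ | ⟨x, y, h⟩
  · rfl
  · rw [Point.neg_some, Point.some.injEq, mordellCurve_negY] at hP
    have hy : y = 0 := self_eq_neg.1 hP.2
    have h_eq := mordellCurve_equation_iff.1 h.1
    rw [hy] at h_eq
    exact absurd (by linear_combination -h_eq) (hk x)

variable {L : Type*} [Field L] [Algebra F L] {θ : L}

-- Substitute the line through the two points into `y² - x³ - k` and evaluate at `x = θ`.
theorem mordellCurve_prod_sub_eq_sq (hθ : θ ^ 3 = -algebraMap F L k) {x₁ y₁ x₂ y₂ : F}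
    (h₁ : (mordellCurve k).Equation x₁ y₁) (h₂ : (mordellCurve k).Equation x₂ y₂)
    (hxy : ¬(x₁ = x₂ ∧ y₁ = (mordellCurve k).negY x₂ y₂)) :
    (algebraMap F L x₁ - θ) * (algebraMap F L x₂ - θ) *
        (algebraMap F L ((mordellCurve k).addX x₁ x₂ ((mordellCurve k).slope x₁ x₂ y₁ y₂)) - θ) =
      (algebraMap F L ((mordellCurve k).slope x₁ x₂ y₁ y₂) * (θ - algebraMap F L x₁) +
        algebraMap F L y₁) ^ 2 := by
  have h_eval := congrArg (aeval θ) (addPolynomial_slope h₁ h₂ hxy)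
  rw [addPolynomial_eq] at h_eval
  simp only [mordellCurve, Cubic.toPoly, map_neg, map_add, map_mul, map_sub, map_pow, aeval_X,
    aeval_C, map_zero, map_one, map_ofNat] at h_eval ⊢
  linear_combination -h_eval - hθ

variable {A : Type*} [AddCommGroup A] [Module (ZMod 2) A]

/-- The map `P ↦ χ (x(P) - θ)`, `0 ↦ 0` of 2-descent on `y² = x³ + k`, for a cube root `θ ∉ F` of
`-k` and a homomorphism `χ` from `Lˣ` to a group of exponent two, written additively. -/
def mordellDescent (hθF : ∀ x : F, algebraMap F L x - θ ≠ 0) (χ : Additive Lˣ →+ A) :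
    (mordellCurve k).Point → A
  | 0 => 0
  | .some x _ _ => χ (.ofMul (.mk0 _ (hθF x)))

theorem mordellDescent_add (hθ : θ ^ 3 = -algebraMap F L k)
    (hθF : ∀ x : F, algebraMap F L x - θ ≠ 0) (χ : Additive Lˣ →+ A)
    (P Q : (mordellCurve k).Point) :
    mordellDescent hθF χ (P + Q) = mordellDescent hθF χ P + mordellDescent hθF χ Q := by
  have h_sq (u : Lˣ) : χ (.ofMul (u ^ 2)) = 0 := by
    rw [ofMul_pow, map_nsmul, ZModModule.char_nsmul_eq_zero]
  rcases P with _ | ⟨x₁, y₁, h₁⟩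
  · exact (congrArg _ (zero_add Q)).trans (zero_add _).symm
  rcases Q with _ | ⟨x₂, y₂, h₂⟩
  · exact (congrArg _ (add_zero _)).trans (add_zero _).symm
  by_cases hxy : x₁ = x₂ ∧ y₁ = (mordellCurve k).negY x₂ y₂
  · obtain ⟨rfl, hy⟩ := hxy
    rw [Point.add_of_Y_eq rfl hy]
    change 0 = χ _ + χ _
    rw [← map_add, ← ofMul_mul, ← sq, h_sq]
  · rw [Point.add_some hxy]
    have h_prod := mordellCurve_prod_sub_eq_sq hθ h₁.1 h₂.1 hxy
    have h_ne := pow_ne_zero_iff two_ne_zero |>.1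
      (h_prod ▸ mul_ne_zero (mul_ne_zero (hθF _) (hθF _)) (hθF _))
    have h_units : Units.mk0 _ (hθF x₁) * Units.mk0 _ (hθF x₂) * Units.mk0 _ (hθF _) =
        Units.mk0 _ h_ne ^ 2 := Units.ext h_prod
    have h_sum := (congrArg (χ ∘ Additive.ofMul) h_units).trans (h_sq _)
    simp only [Function.comp_apply, ofMul_mul, map_add] at h_sum
    change χ _ = χ _ + χ _
    rw [eq_neg_of_add_eq_zero_left h_sum, ZModModule.neg_eq_self]

end Field

section Padic

variable {p : ℕ} [Fact p.Prime]

theorem norm_mul_zpow_neg_valuation {x : ℚ_[p]} (hx : x ≠ 0) :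
    ‖x * (p : ℚ_[p]) ^ (-x.valuation)‖ = 1 := by
  have hp : (p : ℝ) ≠ 0 := Nat.cast_ne_zero.2 (Fact.out : p.Prime).ne_zero
  rw [norm_mul, Padic.norm_eq_zpow_neg_valuation hx, Padic.norm_p_zpow, neg_neg,
    ← zpow_add₀ hp, neg_add_cancel, zpow_zero]

theorem mul_zpow_neg_valuation_mul {x y : ℚ_[p]} (hx : x ≠ 0) (hy : y ≠ 0) :
    x * y * (p : ℚ_[p]) ^ (-(x * y).valuation) =
      x * (p : ℚ_[p]) ^ (-x.valuation) * (y * (p : ℚ_[p]) ^ (-y.valuation)) := by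
  have hp : (p : ℚ_[p]) ≠ 0 := Nat.cast_ne_zero.2 (Fact.out : p.Prime).ne_zero
  rw [Padic.valuation_mul hx hy, neg_add, zpow_add₀ hp, mul_mul_mul_comm]

/-- The homomorphism `x ↦ x p⁻ᵛ⁽ˣ⁾` onto the `p`-adic units. -/
noncomputable def padicUnitPart (p : ℕ) [Fact p.Prime] : ℚ_[p]ˣ →* ℤ_[p]ˣ :=
  MonoidHom.toHomUnits
    { toFun x := ⟨x * (p : ℚ_[p]) ^ (-(x : ℚ_[p]).valuation),
        (norm_mul_zpow_neg_valuation x.ne_zero).le⟩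
      map_one' := PadicInt.ext (by simp)
      map_mul' x y := PadicInt.ext (mul_zpow_neg_valuation_mul x.ne_zero y.ne_zero) }

theorem padicUnitPart_of_coe_eq {x : ℚ_[p]ˣ} {u : ℤ_[p]ˣ} (h : (x : ℚ_[p]) = u) :
    padicUnitPart p x = u := by
  have h_val : (x : ℚ_[p]).valuation = 0 := by
    have h_mul := PadicInt.valuation_mul u.ne_zero u⁻¹.ne_zero
    rw [Units.mul_inv, PadicInt.valuation_one] at h_mul
    rw [h, PadicInt.valuation_coe]
    omega
  refine Units.ext (PadicInt.ext ?_)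
  change (x : ℚ_[p]) * (p : ℚ_[p]) ^ (-(x : ℚ_[p]).valuation) = u
  rw [h_val, neg_zero, zpow_zero, mul_one, h]

/-- The isomorphism of `{±1}`, written additively, with `ℤ/2`. -/
def intUnitsToZMod : Additive ℤˣ →+ ZMod 2 where
  toFun u := if u.toMul = 1 then 0 else 1
  map_zero' := rfl
  map_add' := by decide

/-- The quadratic character of the reduction modulo `p` of the unit part. -/
noncomputable def padicQuadraticChar (p : ℕ) [Fact p.Prime] : Additive ℚ_[p]ˣ →+ ZMod 2 :=
  intUnitsToZMod.comp <| MonoidHom.toAdditive <|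
    (quadraticChar (ZMod p)).toUnitHom.comp <|
      (Units.map (PadicInt.toZMod (p := p) : ℤ_[p] →* ZMod p)).comp (padicUnitPart p)

/-- Euler's criterion for `a` to be a square modulo the prime `p`, as an element of `ℤ/2`:
`0` for squares and `1` for nonsquares. -/
def eulerBit (p : ℕ) (a : ℤ) : ZMod 2 :=
  if (p : ℤ) ∣ a ^ (p / 2) - 1 then 0 else 1

theorem padicQuadraticChar_eq_eulerBit {x : ℚ_[p]ˣ} {z : ℤ_[p]} {a : ℤ} (hxz : (x : ℚ_[p]) = z)
    (hza : PadicInt.toZMod z = (a : ZMod p)) (ha : ¬(p : ℤ) ∣ a) :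
    padicQuadraticChar p (.ofMul x) = eulerBit p a := by
  have ha' : (a : ZMod p) ≠ 0 := by rwa [ne_eq, ZMod.intCast_zmod_eq_zero_iff_dvd]
  have hz : IsUnit z := by
    rw [← hza, ne_eq, ← RingHom.mem_ker, PadicInt.ker_toZMod] at ha'
    simpa using ha'
  obtain ⟨u, rfl⟩ := hz
  have h_char : padicQuadraticChar p (.ofMul x) =
      if quadraticChar (ZMod p) (PadicInt.toZMod (padicUnitPart p x : ℤ_[p])) = 1 then 0 else 1 :=
    if_congr Units.ext_iff rfl rfl
  rw [h_char, padicUnitPart_of_coe_eq hxz, hza]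
  refine if_congr ?_ rfl rfl
  rw [quadraticChar_one_iff_isSquare ha', ZMod.euler_criterion p ha',
    ← ZMod.intCast_zmod_eq_zero_iff_dvd, Int.cast_sub, Int.cast_pow, Int.cast_one, sub_eq_zero]

theorem exists_padicInt_cube_eq {k t : ℤ} (h_root : (p : ℤ) ∣ t ^ 3 + k)
    (h_simple : ¬(p : ℤ) ∣ 3 * t ^ 2) :
    ∃ θ : ℤ_[p], θ ^ 3 = -(k : ℤ_[p]) ∧ PadicInt.toZMod θ = (t : ZMod p) := by
  have h_eval : aeval (t : ℤ_[p]) (X ^ 3 + C k) = ((t ^ 3 + k : ℤ) : ℤ_[p]) := by simp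
  have h_deriv : aeval (t : ℤ_[p]) (derivative (X ^ 3 + C k)) = ((3 * t ^ 2 : ℤ) : ℤ_[p]) := by
    simp [map_ofNat]
  have h_norm : ‖((3 * t ^ 2 : ℤ) : ℤ_[p])‖ = 1 :=
    le_antisymm (PadicInt.norm_le_one _) <|
      not_lt.1 <| (PadicInt.norm_int_lt_one_iff_dvd _).not.2 h_simple
  obtain ⟨θ, hθ, h_near, -⟩ := hensels_lemma (F := X ^ 3 + C k) (a := (t : ℤ_[p])) <| by
    rw [h_eval, h_deriv, h_norm, one_pow]
    exact (PadicInt.norm_int_lt_one_iff_dvd _).2 h_root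
  refine ⟨θ, eq_neg_of_add_eq_zero_left (by simpa using hθ), ?_⟩
  have h_mem : θ - t ∈ RingHom.ker (PadicInt.toZMod (p := p)) := by
    rw [PadicInt.ker_toZMod, IsLocalRing.mem_maximalIdeal, PadicInt.mem_nonunits]
    rwa [h_deriv, h_norm] at h_near
  rwa [RingHom.mem_ker, map_sub, map_intCast, sub_eq_zero] at h_mem

theorem exists_mordellCurve_hom_eq_eulerBit {k t : ℤ} (h_root : (p : ℤ) ∣ t ^ 3 + k)
    (h_simple : ¬(p : ℤ) ∣ 3 * t ^ 2) (hk : ∀ x : ℚ, x ^ 3 ≠ -k) :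
    ∃ ν : (mordellCurve (k : ℚ)).Point →+ ZMod 2,
      ∀ {a d : ℤ} {y : ℚ} (h : (mordellCurve (k : ℚ)).Nonsingular (a / d ^ 2) y),
        ¬(p : ℤ) ∣ d → ¬(p : ℤ) ∣ a - t * d ^ 2 → ν (.some _ _ h) = eulerBit p (a - t * d ^ 2) := by
  obtain ⟨θ, hθ, hθt⟩ := exists_padicInt_cube_eq h_root h_simple
  have hθ' : (θ : ℚ_[p]) ^ 3 = -algebraMap ℚ ℚ_[p] k := by
    simpa using congrArg Subtype.val hθ
  have hθF (x : ℚ) : algebraMap ℚ ℚ_[p] x - θ ≠ 0 := by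
    intro hx
    rw [← sub_eq_zero.1 hx, ← map_pow, ← map_neg] at hθ'
    exact hk x ((algebraMap ℚ ℚ_[p]).injective hθ')
  refine ⟨⟨⟨mordellDescent hθF (padicQuadraticChar p), rfl⟩, mordellDescent_add hθ' hθF _⟩, ?_⟩
  intro a d y h hd ha
  have hd0 : (d : ℚ_[p]) ≠ 0 := by
    intro h0
    rw [Int.cast_eq_zero] at h0
    exact hd (h0 ▸ dvd_zero _)
  have h_scale : ((Units.mk0 _ (hθF (a / d ^ 2)) * Units.mk0 _ hd0 ^ 2 : ℚ_[p]ˣ) : ℚ_[p]) =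
      ((a - θ * d ^ 2 : ℤ_[p]) : ℚ_[p]) := by
    push_cast [Units.val_mk0, map_div₀, map_pow, map_intCast]
    field_simp
  rw [← padicQuadraticChar_eq_eulerBit h_scale (by simp [hθt]) ha, ofMul_mul, map_add, ofMul_pow,
    map_nsmul, ZModModule.char_nsmul_eq_zero, add_zero]
  rfl

end Padic

end Descent

section RankSeventeen

/-- The constant of the curve `y² = x³ + k` of rank at least `17`. -/
def rankSeventeenConst : ℤ := 24537619889008718205152851658505801

/-- The numerators `a` in the points `(a / d², b / d³)`. -/
def pointNumX : Fin 17 → ℤ :=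
  ![-287518001660, -249954149276, -231387235676, -218829008658, -153863915480, -12083686365,
    179588218407, 194693247690, 481938369495, 527526224524, 639659255710, 660796972800,
    -2246341227016749407801077410550193, -1530258901807968151540909932577793,
    -1357530118686900147647970507328689, -60909606279607099433482552781489,
    4070617319945848329595515761088511]

/-- The numerators `b` in the points `(a / d², b / d³)`. -/
def pointNumY : Fin 17 → ℤ :=
  ![27739572552099901, 94452185380426435, 110223114934451005, 118569576333381183,
    144551131013151901, 156639252691623474, 174154202398188288, 178654854781822599,
    369425010854453724, 413931980240076925, 535035640112602849, 559532270810391651,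
    189727099157524508911414160225111727614398178624732,
    324249335200133933850317693151653567330828835856232,
    353262408458886203576226446799736203277224973822140,
    559894566210024352599123264425804049383353475886980,
    1234700570224852384045109661596083276911765147042520]

/-- The integers `d` in the points `(a / d², b / d³)`. -/
def pointDenom : Fin 17 → ℤ :=
  ![1, 1, 1, 1, 1, 1, 1, 1, 1, 1, 1, 1, 111571430819, 128158333619, 131572092067, 152896213667,
    197517823667]

/-- The primes `p` at which a quadratic descent character is taken. -/
def descentPrime : Fin 17 → ℕ :=
  ![37, 47, 61, 61, 83, 107, 113, 131, 137, 149, 167, 173, 179, 191, 197, 223, 223]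

/-- The simple roots of `X³ + k` modulo the descent primes; the primes `61` and `223` occur with two
different roots. -/
def descentRoot : Fin 17 → ℤ :=
  ![3, 10, 11, 21, 51, 43, 15, 105, 15, 2, 114, 12, 109, 38, 189, 108, 198]

/-- The values of the descent characters (rows) on the points (columns). -/
def descentMatrix : Matrix (Fin 17) (Fin 17) (ZMod 2) :=
  .of fun j i ↦ eulerBit (descentPrime j) (pointNumX i - descentRoot j * pointDenom i ^ 2)

/-- The inverse of `descentMatrix`. -/
def descentMatrixInv : Matrix (Fin 17) (Fin 17) (ZMod 2) :=
  !![0, 0, 0, 0, 1, 1, 1, 1, 0, 0, 1, 1, 0, 0, 0, 1, 0;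
    0, 0, 0, 1, 0, 0, 1, 1, 1, 1, 1, 1, 0, 0, 1, 1, 0;
    1, 0, 0, 0, 1, 1, 1, 1, 0, 1, 1, 0, 0, 0, 0, 0, 1;
    0, 0, 1, 0, 1, 1, 0, 1, 0, 1, 0, 0, 0, 0, 0, 0, 1;
    0, 0, 1, 1, 0, 1, 1, 1, 0, 0, 0, 1, 1, 1, 1, 0, 1;
    1, 0, 1, 0, 0, 0, 1, 1, 1, 1, 0, 1, 1, 1, 1, 0, 1;
    1, 1, 0, 0, 0, 1, 1, 0, 1, 0, 0, 0, 1, 0, 1, 1, 1;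
    0, 1, 1, 1, 1, 1, 1, 1, 1, 1, 0, 0, 0, 0, 0, 1, 0;
    0, 0, 0, 0, 1, 0, 1, 1, 1, 0, 1, 1, 0, 1, 0, 1, 1;
    1, 1, 0, 1, 1, 0, 0, 0, 1, 1, 0, 1, 0, 1, 0, 0, 1;
    1, 0, 0, 0, 0, 0, 1, 0, 1, 0, 0, 0, 1, 1, 0, 1, 1;
    0, 0, 0, 0, 1, 0, 0, 0, 0, 1, 1, 0, 0, 0, 1, 1, 1;
    1, 1, 1, 1, 0, 1, 0, 1, 0, 0, 0, 1, 1, 1, 1, 0, 1;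
    1, 1, 0, 1, 1, 0, 0, 0, 1, 0, 1, 1, 1, 1, 0, 1, 0;
    1, 0, 1, 1, 0, 1, 1, 0, 0, 1, 1, 0, 1, 1, 0, 0, 1;
    0, 1, 0, 1, 0, 0, 1, 0, 0, 0, 0, 1, 0, 0, 0, 0, 1;
    1, 0, 0, 1, 1, 1, 0, 0, 0, 0, 0, 0, 0, 1, 0, 1, 1]

theorem descentMatrixInv_mul : descentMatrixInv * descentMatrix = 1 := by
  decide +kernel

theorem prime_descentPrime (j : Fin 17) : (descentPrime j).Prime := by
  fin_cases j <;> norm_num [descentPrime]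

theorem descentPrime_dvd : ∀ j, (descentPrime j : ℤ) ∣ descentRoot j ^ 3 + rankSeventeenConst := by
  decide +kernel

theorem descentPrime_not_dvd : ∀ j, ¬(descentPrime j : ℤ) ∣ 3 * descentRoot j ^ 2 := by
  decide +kernel

theorem descentPrime_not_dvd_pointDenom : ∀ j i, ¬(descentPrime j : ℤ) ∣ pointDenom i := by
  decide +kernel

theorem descentPrime_not_dvd_sub :
    ∀ j i, ¬(descentPrime j : ℤ) ∣ pointNumX i - descentRoot j * pointDenom i ^ 2 := by
  decide +kernel

theorem pointDenom_ne_zero : ∀ i, pointDenom i ≠ 0 := by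
  decide +kernel

theorem pointNumY_sq :
    ∀ i, pointNumY i ^ 2 = pointNumX i ^ 3 + rankSeventeenConst * pointDenom i ^ 6 := by
  decide +kernel

theorem rankSeventeenConst_pos : 0 < rankSeventeenConst := by
  norm_num [rankSeventeenConst]

theorem cube_ne_neg_rankSeventeenConst (x : ℚ) : x ^ 3 ≠ -rankSeventeenConst :=
  cube_ne_neg_intCast (L := 290587867712) (by norm_num [rankSeventeenConst])
    (by norm_num [rankSeventeenConst]) x

theorem nonsingular_point (i : Fin 17) : (mordellCurve (rankSeventeenConst : ℚ)).Nonsingular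
    (pointNumX i / pointDenom i ^ 2) (pointNumY i / pointDenom i ^ 3) := by
  refine mordellCurve_nonsingular (Int.cast_ne_zero.2 rankSeventeenConst_pos.ne') ?_
  have hd : (pointDenom i : ℚ) ≠ 0 := Int.cast_ne_zero.2 (pointDenom_ne_zero i)
  have h : (pointNumY i : ℚ) ^ 2 = pointNumX i ^ 3 + rankSeventeenConst * pointDenom i ^ 6 := by
    exact_mod_cast pointNumY_sq i
  field_simp
  linear_combination h

/-- The seventeen explicit points of the curve. -/
def rankSeventeenPoint (i : Fin 17) : (mordellCurve (rankSeventeenConst : ℚ)).Point :=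
  .some _ _ (nonsingular_point i)

theorem exists_hom_rankSeventeenPoint_eq (j : Fin 17) :
    ∃ ν : (mordellCurve (rankSeventeenConst : ℚ)).Point →+ ZMod 2,
      ∀ i, ν (rankSeventeenPoint i) = descentMatrix j i := by
  have : Fact (descentPrime j).Prime := ⟨prime_descentPrime j⟩
  obtain ⟨ν, hν⟩ := exists_mordellCurve_hom_eq_eulerBit (descentPrime_dvd j)
    (descentPrime_not_dvd j) cube_ne_neg_rankSeventeenConst
  exact ⟨ν, fun i ↦ hν (nonsingular_point i) (descentPrime_not_dvd_pointDenom j i)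
    (descentPrime_not_dvd_sub j i)⟩

theorem linearIndependent_rankSeventeenPoint : LinearIndependent ℤ rankSeventeenPoint := by
  choose ν hν using exists_hom_rankSeventeenPoint_eq
  refine linearIndependent_int_of_linearIndependent_zmod one_lt_two
    (fun _ ↦ mordellCurve_eq_zero_of_two_nsmul_eq_zero cube_ne_neg_rankSeventeenConst)
    (AddMonoidHom.pi ν) ?_
  have h_cols : AddMonoidHom.pi ν ∘ rankSeventeenPoint = descentMatrix.col :=
    funext fun i ↦ funext fun j ↦ hν j i
  rw [h_cols]
  exact Matrix.linearIndependent_cols_of_isUnit (IsUnit.of_mul_eq_one_right _ descentMatrixInv_mul)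

end RankSeventeen

/-- There is a constant `c > 0` such that, for infinitely many integers `D`, the
Mordell equation `y² = x³ + D` has more than `c·(log |D|)^{17/19}` integral
solutions. -/
theorem stmt_19 :
    ∃ c : ℝ, 0 < c ∧
      {D : ℤ | c * Real.log |(D : ℝ)| ^ ((17 : ℝ) / 19) <
        (Set.ncard {p : ℤ × ℤ | p.2 ^ 2 = p.1 ^ 3 + D} : ℝ)}.Infinite := by
  have h_exp : (Fintype.card (Fin 17) : ℝ) / (Fintype.card (Fin 17) + 2 : ℕ) = 17 / 19 := by
    norm_num
  exact h_exp ▸ exists_infinite_setOf_log_rpow_lt_ncard rankSeventeenConst_pos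
    linearIndependent_rankSeventeenPoint
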